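/- arXiv:1505.06059 — 2 statements merged into one kernel-verified Lean document; each statement's English description precedes it below -/
import Mathlib

section
/- Let G be a finite group. Then D(G) = |G| if and only if G is cyclic or G is isomorphic to a dihedral group of order 2n for some odd n ≥ 3. -/
/-- `S` is a product-one sequence over `G`: some ordering of its terms multiplies to `1`. -/
def IsProductOne {G : Type*} [Group G] (S : Multiset G) : Prop :=
  ∃ l : List G, (l : Multiset G) = S ∧ l.prod = 1

/-- The set of products `π(S)` of all orderings of the terms of `S`. -/
def piSet {G : Type*} [Group G] (S : Multiset G) : Set G :=
  {g | ∃ l : List G, (l : Multiset G) = S ∧ l.prod = g}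

/-- The set `Π(S)` of products of nontrivial subsequences of `S`. -/
def subseqProds {G : Type*} [Group G] (S : Multiset G) : Set G :=
  {g | ∃ T : Multiset G, T ≤ S ∧ T ≠ 0 ∧ g ∈ piSet T}

/-- `S` is product-one free. -/
def ProductOneFree {G : Type*} [Group G] (S : Multiset G) : Prop :=
  (1 : G) ∉ subseqProds S

/-- `S` is an atom of the monoid `B(G)` of product-one sequences: it is a nontrivial
product-one sequence that is not the concatenation of two nontrivial product-one sequences. -/
def IsPOAtom {G : Type*} [Group G] (S : Multiset G) : Prop :=
  IsProductOne S ∧ S ≠ 0 ∧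
    ∀ T₁ T₂ : Multiset G, IsProductOne T₁ → IsProductOne T₂ → T₁ + T₂ = S →
      T₁ = 0 ∨ T₂ = 0

/-- The large Davenport constant `D(G)`: the supremum of lengths of atoms of `B(G)`. -/
noncomputable def largeD (G : Type*) [Group G] : ℕ :=
  sSup {n : ℕ | ∃ S : Multiset G, IsPOAtom S ∧ Multiset.card S = n}

/-- The small Davenport constant `d(G)`: the supremum of lengths of product-one free
sequences over `G`. -/
noncomputable def smalld (G : Type*) [Group G] : ℕ :=
  sSup {n : ℕ | ∃ S : Multiset G, ProductOneFree S ∧ Multiset.card S = n}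

/-!
A product-one ordering of an atom `S` of length `|G|` has distinct prefix products, so every
element of `G` is one of them. Cut such an ordering into blocks with products in a subgroup `A`, as
short as possible: the block products form an atom of length `|A|` over `A`. Hence the property
passes to subgroups, and for abelian `A` all block products equal one generator `c` of `A`.

Suppose that `A` is moreover normal and self-centralizing, so that the commutators of `c` with
elements of `G` separate the cosets of `A`. Moving one-letter blocks `c` into the interior of other
blocks, or rotating the words of some blocks, multiplies the total product by such commutators, and
`S` decomposes if the result is `1`. Since `|A| - 1` elements of `A` without a product-one
subsequence shorter than `|A|` must all be equal, the prefixes of a block can visit only one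
nontrivial coset. As the ordering of `S` may be cut starting from any position, the cosets of its
prefix products are then at most two in number, so `A` has index at most `2`. In index `2`, the
commutators outside `A` generate `A` and are inverted by conjugation, which makes `|A|` odd and `G`
dihedral.

By induction a `p`-group carrying such an atom is cyclic, so in general all Sylow subgroups are
cyclic. Then so is the commutator subgroup, and a maximal abelian subgroup above it serves as `A`.

Conversely, `g ^ |G|` is an atom for a generator `g`, and so is, in the dihedral group of order
`2n` with `n` odd, the sequence of `n` copies of each of two adjacent reflections: in a
factorization one of the factors has an odd number of copies of the second reflection, so its
alternating sum is a nonzero multiple of `n`, but at most half its length: it is the whole sequence.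
-/

section Multisets

variable {α β : Type*}

theorem exists_le_map_eq {f : α → β} {M : Multiset α} {s : Multiset β} (h : s ≤ M.map f) :
    ∃ M' ≤ M, M'.map f = s := by
  induction M, s using Quotient.inductionOn₂ with
  | h l t =>
    obtain ⟨t', ht', hs⟩ : List.Subperm t (l.map f) := h
    obtain ⟨l', hl', rfl⟩ := List.sublist_map_iff.mp hs
    exact ⟨l', Multiset.coe_le.mpr hl'.subperm, by simpa using ht'⟩

theorem exists_map_eq_add {f : α → β} {M : Multiset α} {s t : Multiset β}
    (h : M.map f = s + t) : ∃ M₁ M₂, M = M₁ + M₂ ∧ M₁.map f = s ∧ M₂.map f = t := by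
  obtain ⟨M₁, hle, rfl⟩ := exists_le_map_eq (h ▸ Multiset.le_add_right s t)
  obtain ⟨M₂, rfl⟩ := Multiset.le_iff_exists_add.mp hle
  exact ⟨M₁, M₂, rfl, rfl, add_left_cancel (by rw [← h, Multiset.map_add])⟩

theorem exists_list_map_eq {f : α → β} {M : Multiset α} {l : List β} (h : M.map f = l) :
    ∃ L : List α, (L : Multiset α) = M ∧ L.map f = l := by
  induction l generalizing M with
  | nil => exact ⟨[], by simpa [eq_comm] using h, rfl⟩
  | cons b l ih =>
    obtain ⟨M₁, M₂, rfl, h₁, h₂⟩ := exists_map_eq_add (s := {b}) (t := (l : Multiset β)) h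
    obtain ⟨a, rfl, rfl⟩ := Multiset.map_eq_singleton.mp h₁
    obtain ⟨L, rfl, rfl⟩ := ih h₂
    exact ⟨a :: L, rfl, rfl⟩

theorem exists_le_add_split {s a b : Multiset α} (h : s ≤ a + b) :
    ∃ s₁ ≤ a, ∃ s₂ ≤ b, s = s₁ + s₂ := by
  classical
  refine ⟨s ∩ a, Multiset.inter_le_right, s - a, ?_, ?_⟩
  · rwa [Multiset.sub_le_iff_le_add, add_comm]
  · rw [add_comm, Multiset.sub_add_inter]

theorem exists_le_card_eq {s : Multiset α} {n : ℕ} (h : n ≤ Multiset.card s) :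
    ∃ t ≤ s, Multiset.card t = n := by
  obtain ⟨t, ht⟩ := Multiset.card_pos_iff_exists_mem.mp
    ((Nat.choose_pos h).trans_eq (Multiset.card_powersetCard n s).symm)
  exact ⟨t, Multiset.mem_powersetCard.mp ht⟩

end Multisets

section FullAtoms

variable {G : Type*} [Group G]

theorem injective_prod_take {l : List G}
    (h : ∀ x v y, l = x ++ v ++ y → v.prod = 1 → v = [] ∨ y = []) :
    Function.Injective fun i : Fin l.length => (l.take i).prod := by
  have prod_take_ne {i j : Fin l.length} (hij : i < j) : (l.take i).prod ≠ (l.take j).prod := by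
    intro heq
    have hj : l.take j = l.take i ++ (l.drop i).take (j - i) := by
      rw [← List.take_add, Nat.add_sub_cancel' hij.le]
    rw [hj, List.prod_append, left_eq_mul] at heq
    rcases h _ _ (l.drop j) (by rw [← hj, List.take_append_drop]) heq with h0 | h0 <;>
      replace h0 := congrArg List.length h0 <;>
      simp only [List.length_take, List.length_drop, List.length_nil] at h0 <;>
      omega
  intro i j heq
  by_contra hne
  rcases lt_or_gt_of_ne hne with h' | h'
  exacts [prod_take_ne h' heq, prod_take_ne h' heq.symm]

theorem exists_prefix_prod_eq [Finite G] {l : List G} (hl : l.length = Nat.card G)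
    (h : ∀ x v y, l = x ++ v ++ y → v.prod = 1 → v = [] ∨ y = []) (g : G) :
    ∃ x y, l = x ++ y ∧ y ≠ [] ∧ x.prod = g := by
  obtain ⟨i, hi⟩ := ((injective_prod_take h).bijective_of_nat_card_le (by simp [hl])).2 g
  exact ⟨l.take i, l.drop i, (List.take_append_drop _ _).symm, by simp, hi⟩

/- If `x ≠ y`, order `t` with `x, y` in front. Some prefix has product `y`, and deleting the letter
`y` from it leaves a short subsequence with product `1`. -/
theorem eq_of_forall_prod_ne_one {A : Type*} [CommGroup A] [Finite A] {t : Multiset A}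
    (ht : Nat.card A ≤ Multiset.card t + 1)
    (h : ∀ s ≤ t, s ≠ 0 → Multiset.card s < Nat.card A → s.prod ≠ 1) {x y : A}
    (hx : x ∈ t) (hy : y ∈ t) : x = y := by
  by_contra hxy
  have : Nontrivial A := nontrivial_of_ne x y hxy
  obtain ⟨t', rfl⟩ := Multiset.exists_cons_of_mem hx
  obtain ⟨t'', rfl⟩ :=
    Multiset.exists_cons_of_mem ((Multiset.mem_cons.mp hy).resolve_left (Ne.symm hxy))
  induction t'' using Quotient.inductionOn with | h l => ?_
  obtain ⟨m, hm⟩ : ∃ m, Nat.card A = m + 2 := Nat.exists_eq_add_of_le' Finite.one_lt_card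
  simp only [hm, Multiset.quot_mk_to_coe, Multiset.cons_coe, Multiset.coe_card,
    List.length_cons] at ht h
  have prod_ne_one {s : List A} (hs : s.Sublist (x :: y :: l)) (hs0 : s ≠ [])
      (hlen : s.length < m + 2) : s.prod ≠ 1 := by
    simpa using h s hs.subperm (by simpa using hs0) (by simpa using hlen)
  have prefix_of_append_eq {p q : List A} (hpq : x :: (y :: l).take m ++ [1] = p ++ q)
      (hq : q ≠ []) : p <+: x :: (y :: l).take m := by
    obtain ⟨q', z, rfl⟩ := q.eq_nil_or_concat'.resolve_left hq
    rw [← List.append_assoc] at hpq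
    exact ⟨q', (List.append_inj_left' hpq rfl).symm⟩
  have infix_eq_nil (u v w : List A) (huvw : x :: (y :: l).take m ++ [1] = u ++ v ++ w)
      (hv : v.prod = 1) : v = [] ∨ w = [] := by
    by_contra! hvw
    have hsub :=
      (List.sublist_append_right u v).trans (prefix_of_append_eq huvw hvw.2).sublist
    refine prod_ne_one (hsub.trans ((List.take_sublist m _).cons_cons x)) hvw.1 ?_ hv
    exact hsub.length_le.trans_lt (by simp)
  obtain ⟨p, q, hpq, hq, hp⟩ := exists_prefix_prod_eq (by simp [hm]; omega) infix_eq_nil y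
  match p, hp, prefix_of_append_eq hpq hq with
  | [], hp, _ =>
    exact prod_ne_one (s := [y]) (by simp) (by simp) (by simp) (by simpa using hp.symm)
  | [z], hp, hpre =>
    obtain ⟨rfl, -⟩ := List.cons_prefix_cons.mp hpre
    exact hxy (by simpa using hp)
  | a :: b :: p, hp, hpre =>
    obtain ⟨rfl, hb⟩ := List.cons_prefix_cons.mp hpre
    have hlen := hb.length_le
    obtain ⟨rfl, hpl⟩ := List.cons_prefix_cons.mp (hb.trans (List.take_prefix m (y :: l)))
    refine prod_ne_one ((hpl.sublist.cons b).cons_cons a) (by simp) ?_ ?_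
    · simp only [List.length_cons, List.length_take] at hlen ⊢
      omega
    · simpa [mul_left_comm a b] using hp

theorem isProductOne_iff_prod_eq_one {A : Type*} [CommGroup A] {S : Multiset A} :
    IsProductOne S ↔ S.prod = 1 := by
  constructor
  · rintro ⟨l, rfl, hl⟩
    rwa [Multiset.prod_coe]
  · exact fun h => ⟨S.toList, S.coe_toList, by rw [Multiset.prod_toList, h]⟩

theorem IsPOAtom.infix_eq_nil {l : List G} (hl : IsPOAtom (l : Multiset G)) (h1 : l.prod = 1)
    (x v y : List G) (hxvy : l = x ++ v ++ y) (hv : v.prod = 1) : v = [] ∨ y = [] := by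
  subst hxvy
  rw [List.prod_append, List.prod_append, hv, mul_one, ← List.prod_append] at h1
  have hadd : (v : Multiset G) + ↑(x ++ y) = ↑(x ++ v ++ y) := by
    simp only [← Multiset.coe_add]
    abel
  have h := hl.2.2 _ _ ⟨v, rfl, hv⟩ ⟨x ++ y, rfl, h1⟩ hadd
  simp only [Multiset.coe_eq_zero, List.append_eq_nil_iff] at h
  exact h.imp_right And.right

theorem IsPOAtom.card_le [Finite G] {S : Multiset G} (hS : IsPOAtom S) :
    Multiset.card S ≤ Nat.card G := by
  obtain ⟨l, rfl, h1⟩ := hS.1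
  simpa using Nat.card_le_card_of_injective _ (injective_prod_take (hS.infix_eq_nil h1))

/-- An atom of the greatest conceivable length `|G|`. -/
def IsFullAtom (S : Multiset G) : Prop :=
  IsPOAtom S ∧ Multiset.card S = Nat.card G

variable (G) in
/-- The group `G` carries an atom of length `|G|`; for finite `G` this says `D(G) = |G|`. -/
def HasFullAtom : Prop :=
  ∃ S : Multiset G, IsFullAtom S

theorem largeD_eq_natCard_iff [Finite G] : largeD G = Nat.card G ↔ HasFullAtom G := by
  have hbdd : BddAbove {n | ∃ S : Multiset G, IsPOAtom S ∧ Multiset.card S = n} :=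
    ⟨Nat.card G, by rintro _ ⟨S, hS, rfl⟩; exact hS.card_le⟩
  constructor
  · intro h
    have hne : {n | ∃ S : Multiset G, IsPOAtom S ∧ Multiset.card S = n}.Nonempty := by
      refine Set.nonempty_iff_ne_empty.mpr fun hempty => ?_
      rw [largeD, hempty, csSup_empty] at h
      exact Nat.card_pos.ne h
    obtain ⟨S, hS, hcard⟩ := Nat.sSup_mem hne hbdd
    exact ⟨S, hS, hcard.trans h⟩
  · exact fun hfull => le_antisymm (csSup_le' fun n ⟨S, hS, hn⟩ => hn ▸ hS.card_le)
      (le_csSup hbdd hfull)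

theorem IsFullAtom.exists_prefix_prod_eq [Finite G] {l : List G}
    (hl : IsFullAtom (l : Multiset G)) (h1 : l.prod = 1) (g : G) :
    ∃ x y, l = x ++ y ∧ y ≠ [] ∧ x.prod = g :=
  _root_.exists_prefix_prod_eq (by simpa using hl.2) (hl.1.infix_eq_nil h1) g

theorem IsFullAtom.eq_replicate {A : Type*} [CommGroup A] [Finite A] {S : Multiset A}
    (hS : IsFullAtom S) : ∃ c, orderOf c = Nat.card A ∧ S = Multiset.replicate (Nat.card A) c := by
  have hprod := isProductOne_iff_prod_eq_one.mp hS.1.1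
  obtain ⟨c, hc⟩ := Multiset.exists_mem_of_ne_zero hS.1.2.1
  have hrep : S = Multiset.replicate (Nat.card A) c := by
    refine Multiset.eq_replicate.mpr ⟨hS.2, fun x hx => ?_⟩
    refine eq_of_forall_prod_ne_one (by rw [hS.2]; exact Nat.le_succ _) (fun s hs hs0 hlt h1 => ?_)
      hx hc
    obtain ⟨t, rfl⟩ := Multiset.le_iff_exists_add.mp hs
    have ht : t.prod = 1 := by simpa [h1] using hprod
    rcases hS.1.2.2 s t (isProductOne_iff_prod_eq_one.mpr h1)
      (isProductOne_iff_prod_eq_one.mpr ht) rfl with rfl | rfl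
    · exact hs0 rfl
    · simp [← hS.2] at hlt
  refine ⟨c, orderOf_eq_card_of_forall_mem_zpowers fun g => ?_, hrep⟩
  obtain ⟨l, rfl, h1⟩ := hS.1.1
  obtain ⟨x, y, rfl, -, rfl⟩ := hS.exists_prefix_prod_eq h1 g
  refine Subgroup.list_prod_mem _ fun z hz => ?_
  have hz' : z ∈ Multiset.replicate (Nat.card A) c := hrep ▸ List.mem_append_left y hz
  exact Multiset.eq_of_mem_replicate hz' ▸ Subgroup.mem_zpowers c

end FullAtoms

section Blocks

variable {G : Type*} [Group G]

/-- A nonempty word in the elements of `G` whose product lies in the subgroup `A`. Cutting a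
product-one sequence over `G` into blocks turns it into a sequence over `A`. -/
@[ext]
structure Block (A : Subgroup G) where
  word : List G
  ne_nil : word ≠ []
  prod_mem : word.prod ∈ A

namespace Block

variable {A : Subgroup G}

/-- The product of a block, as an element of `A`. -/
def prod (b : Block A) : A := ⟨b.word.prod, b.prod_mem⟩

/-- The terms of a block, as a sequence over `G`. -/
def terms (b : Block A) : Multiset G := b.word

/-- A block that is not the concatenation of two blocks. -/
def Indecomposable (b : Block A) : Prop :=
  ∀ u w, b.word = u ++ w → u.prod ∈ A → u = [] ∨ w = []

theorem coe_bind_terms (L : List (Block A)) :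
    (L : Multiset (Block A)).bind terms = (L.flatMap word : List G) :=
  Multiset.coe_bind L word

theorem coe_prod_map_prod (L : List (Block A)) :
    ((L.map prod).prod : G) = (L.flatMap word).prod := by
  induction L with
  | nil => simp
  | cons b L ih =>
    rw [List.map_cons, List.prod_cons, Subgroup.coe_mul, ih, List.flatMap_cons, List.prod_append,
      prod]

theorem isProductOne_bind_terms {M : Multiset (Block A)} (hM : IsProductOne (M.map prod)) :
    IsProductOne (M.bind terms) := by
  obtain ⟨l, hl, h1⟩ := hM
  obtain ⟨L, rfl, rfl⟩ := exists_list_map_eq hl.symm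
  exact ⟨L.flatMap word, (coe_bind_terms L).symm, by
    rw [← coe_prod_map_prod, h1, OneMemClass.coe_one]⟩

theorem bind_terms_eq_zero {M : Multiset (Block A)} : M.bind terms = 0 ↔ M = 0 := by
  induction M using Multiset.induction with
  | empty => simp
  | cons b M _ => simp [terms, b.ne_nil]

theorem isPOAtom_map_prod {M : Multiset (Block A)} (hM : IsPOAtom (M.bind terms))
    (h1 : IsProductOne (M.map prod)) : IsPOAtom (M.map prod) := by
  refine ⟨h1, fun h0 => hM.2.1 (by simp_all), fun T₁ T₂ h₁ h₂ hadd => ?_⟩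
  obtain ⟨M₁, M₂, rfl, rfl, rfl⟩ := exists_map_eq_add hadd.symm
  simpa only [bind_terms_eq_zero, Multiset.map_eq_zero] using
    hM.2.2 _ _ (isProductOne_bind_terms h₁) (isProductOne_bind_terms h₂)
      (Multiset.add_bind M₁ M₂ terms).symm

theorem exists_flatMap_eq {l : List G} (hl : l.prod ∈ A) :
    ∃ L : List (Block A), (∀ b ∈ L, b.Indecomposable) ∧ L.flatMap word = l := by
  induction hn : l.length using Nat.strong_induction_on generalizing l with
  | h n ih =>
    subst hn
    by_cases hsplit : ∃ u w, l = u ++ w ∧ u.prod ∈ A ∧ u ≠ [] ∧ w ≠ []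
    · obtain ⟨u, w, rfl, hu, hu0, hw0⟩ := hsplit
      rw [List.prod_append] at hl
      obtain ⟨Lu, hLu, hu'⟩ := ih u.length (by simpa using List.length_pos_iff.mpr hw0) hu rfl
      obtain ⟨Lw, hLw, hw'⟩ := ih w.length (by simpa using List.length_pos_iff.mpr hu0)
        ((A.mul_mem_cancel_left hu).mp hl) rfl
      exact ⟨Lu ++ Lw, by simpa [or_imp, forall_and] using ⟨hLu, hLw⟩,
        by rw [List.flatMap_append, hu', hw']⟩
    · by_cases h0 : l = []
      · exact ⟨[], by simp, by simp [h0]⟩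
      · refine ⟨[⟨l, h0, hl⟩], ?_, by simp⟩
        simp only [List.mem_singleton, forall_eq]
        intro u w huw hu
        by_contra! h
        exact hsplit ⟨u, w, huw, hu, h⟩

theorem exists_append_of_flatMap_eq_append {L : List (Block A)}
    (hL : ∀ b ∈ L, b.Indecomposable) {x y : List G} (hxy : L.flatMap word = x ++ y)
    (hy : y ≠ []) (hx : x.prod ∈ A) :
    ∃ L₁ L₂, L = L₁ ++ L₂ ∧ L₂ ≠ [] ∧ L₁.flatMap word = x := by
  induction L generalizing x with
  | nil => simp_all
  | cons b L ih =>
    by_cases hx0 : x = []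
    · exact ⟨[], b :: L, rfl, by simp, by simp [hx0]⟩
    rw [List.flatMap_cons, List.append_eq_append_iff] at hxy
    simp only [List.forall_mem_cons] at hL
    obtain ⟨x', rfl, hx'⟩ : ∃ x', x = b.word ++ x' ∧ L.flatMap word = x' ++ y := by
      rcases hxy with h | ⟨w, hw, hy⟩
      · exact h
      · obtain rfl := (hL.1 x w hw hx).resolve_left hx0
        exact ⟨[], by simpa using hw.symm, by simpa using hy.symm⟩
    rw [List.prod_append, A.mul_mem_cancel_left b.prod_mem] at hx
    obtain ⟨L₁, L₂, rfl, hL₂, rfl⟩ := ih hL.2 hx' hx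
    exact ⟨b :: L₁, L₂, rfl, hL₂, by simp⟩

theorem isFullAtom_map_prod_of_card [Finite G] {M : Multiset (Block A)}
    (hM : IsFullAtom (M.bind terms)) (h1 : IsProductOne (M.map prod))
    (hcard : Nat.card A ≤ Multiset.card M) : IsFullAtom (M.map prod) := by
  have hatom := isPOAtom_map_prod hM.1 h1
  exact ⟨hatom, hatom.card_le.antisymm (by simpa using hcard)⟩

theorem isFullAtom_map_prod [Finite G] {M : Multiset (Block A)}
    (hM : IsFullAtom (M.bind terms)) (h1 : IsProductOne (M.map prod))
    (hind : ∀ b ∈ M, b.Indecomposable) : IsFullAtom (M.map prod) := by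
  refine isFullAtom_map_prod_of_card hM h1 ?_
  obtain ⟨l, hl, h1⟩ := h1
  obtain ⟨L, rfl, rfl⟩ := exists_list_map_eq hl.symm
  rw [coe_bind_terms] at hM
  have hsurj : Function.Surjective fun i : Fin L.length => ((L.take i).map prod).prod := by
    intro a
    obtain ⟨x, y, hxy, hy, hx⟩ :=
      hM.exists_prefix_prod_eq (by rw [← coe_prod_map_prod, h1, OneMemClass.coe_one]) a
    obtain ⟨L₁, L₂, rfl, hL₂, rfl⟩ :=
      exists_append_of_flatMap_eq_append hind hxy hy (hx ▸ a.2)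
    refine ⟨⟨L₁.length, by simp [List.length_pos_iff, hL₂]⟩, Subtype.ext ?_⟩
    simpa only [List.take_left', coe_prod_map_prod] using hx
  simpa using Nat.card_le_card_of_surjective _ hsurj

end Block

theorem HasFullAtom.subgroup [Finite G] (h : HasFullAtom G) (A : Subgroup G) : HasFullAtom A := by
  obtain ⟨S, hS⟩ := h
  obtain ⟨l, rfl, h1⟩ := hS.1.1
  obtain ⟨L, hL, rfl⟩ := Block.exists_flatMap_eq (h1 ▸ A.one_mem)
  exact ⟨_, Block.isFullAtom_map_prod (M := L) (by rwa [Block.coe_bind_terms])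
    ⟨_, rfl, Subtype.ext (by rw [Block.coe_prod_map_prod, h1, OneMemClass.coe_one])⟩ hL⟩

open scoped IsMulCommutative in
theorem HasFullAtom.isCyclic_of_isMulCommutative [Finite G] (h : HasFullAtom G) {A : Subgroup G}
    [IsMulCommutative A] : IsCyclic A := by
  obtain ⟨S, hS⟩ := h.subgroup A
  obtain ⟨c, hc, -⟩ := hS.eq_replicate
  exact isCyclic_of_orderOf_eq_card c hc

namespace Block

variable {A : Subgroup G} [IsMulCommutative A] [Finite G]

open scoped IsMulCommutative

theorem exists_forall_prod_eq_of_card {M : Multiset (Block A)}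
    (hM : IsFullAtom (M.bind terms)) (h1 : (M.map prod).prod = 1)
    (hcard : Nat.card A ≤ Multiset.card M) :
    ∃ c : A, ∀ b ∈ M, b.prod = c := by
  obtain ⟨c, -, hc⟩ :=
    (isFullAtom_map_prod_of_card hM (isProductOne_iff_prod_eq_one.mpr h1) hcard).eq_replicate
  exact ⟨c, fun b hb => Multiset.eq_of_mem_replicate (hc ▸ Multiset.mem_map_of_mem prod hb)⟩

theorem exists_orderOf_eq_card_and_forall_prod_eq {M : Multiset (Block A)}
    (hM : IsFullAtom (M.bind terms)) (h1 : (M.map prod).prod = 1) :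
    ∃ c : A, orderOf c = Nat.card A ∧ ∀ b ∈ M, b.Indecomposable → b.prod = c := by
  choose D hD hDb using fun b : Block A => exists_flatMap_eq b.prod_mem
  have hterms : (M.bind fun b => (D b : Multiset (Block A))).bind terms = M.bind terms := by
    rw [Multiset.bind_assoc]
    exact Multiset.bind_congr fun b _ => by rw [coe_bind_terms, hDb, terms]
  have hprod : ((M.bind fun b => (D b : Multiset (Block A))).map prod).prod = 1 := by
    rw [Multiset.map_bind, Multiset.prod_bind, ← h1]
    refine congrArg _ (Multiset.map_congr rfl fun b _ => Subtype.ext ?_)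
    rw [Multiset.map_coe, Multiset.prod_coe, coe_prod_map_prod, hDb, prod]
  obtain ⟨c, hc, hrep⟩ := (isFullAtom_map_prod (hterms.symm ▸ hM)
    (isProductOne_iff_prod_eq_one.mpr hprod) fun b hb => by
      obtain ⟨b', -, hb'⟩ := Multiset.mem_bind.mp hb
      exact hD b' b hb').eq_replicate
  refine ⟨c, hc, fun b hb hind => ?_⟩
  obtain ⟨b', L, hL⟩ := List.exists_cons_of_ne_nil (l := D b) fun h0 =>
    b.ne_nil (by rw [← hDb, h0, List.flatMap_nil])
  have hword : b.word = b'.word ++ L.flatMap word := by rw [← hDb, hL, List.flatMap_cons]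
  rw [(hind _ _ hword b'.prod_mem).resolve_left b'.ne_nil, List.append_nil] at hword
  obtain rfl : b = b' := Block.ext hword
  have hmem : b ∈ M.bind fun b => (D b : Multiset (Block A)) :=
    Multiset.mem_bind.mpr ⟨b, hb, by simp [hL]⟩
  exact Multiset.eq_of_mem_replicate (hrep ▸ Multiset.mem_map_of_mem prod hmem)

end Block

end Blocks

section Insertion

variable {G : Type*} [Group G] {A : Subgroup G} [A.Normal]

theorem mk_prod_append_replicate_append (c : A) (u w : List G) (j : ℕ) :
    (((u ++ List.replicate j (c : G) ++ w).prod : G) : G ⧸ A) = ((u ++ w).prod : G) := by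
  simp [QuotientGroup.mk_mul, (QuotientGroup.eq_one_iff (c : G)).mpr c.2]

namespace Block

/-- The block obtained from `b` by inserting `j` copies of `c` between `u` and `w`. -/
def insertPow (b : Block A) (c : A) (j : ℕ) {u w : List G} (h : b.word = u ++ w) : Block A where
  word := u ++ List.replicate j (c : G) ++ w
  ne_nil h0 := b.ne_nil (by simp_all)
  prod_mem := by
    rw [← QuotientGroup.eq_one_iff, mk_prod_append_replicate_append, ← h,
      QuotientGroup.eq_one_iff]
    exact b.prod_mem

variable {b : Block A} (c : A) (j : ℕ) {u w : List G} (h : b.word = u ++ w)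

theorem terms_insertPow :
    (b.insertPow c j h).terms = Multiset.replicate j (c : G) + b.terms := by
  simp only [terms, insertPow, h, ← Multiset.coe_add, Multiset.coe_replicate]
  abel

theorem prod_insertPow :
    (b.insertPow c j h).prod = MulAut.conjNormal u.prod c ^ j * b.prod := by
  apply Subtype.ext
  simp only [prod, insertPow, h, Subgroup.coe_mul, Subgroup.coe_pow, MulAut.conjNormal_apply,
    conj_pow, List.prod_append, List.prod_replicate]
  group

variable {c j}

theorem Indecomposable.insertPow (hb : b.Indecomposable) (hu : u.prod ∉ A) :
    (b.insertPow c j h).Indecomposable := by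
  intro p q hpq hp
  change u ++ List.replicate j (c : G) ++ w = p ++ q at hpq
  have hu0 : u ≠ [] := by
    rintro rfl
    exact hu A.one_mem
  rcases List.append_eq_append_iff.mp hpq with ⟨w', rfl, rfl⟩ | ⟨s, hs, rfl⟩
  · rw [← QuotientGroup.eq_one_iff, mk_prod_append_replicate_append,
      QuotientGroup.eq_one_iff] at hp
    refine .inr ((hb (u ++ w') q (by rw [h, List.append_assoc]) hp).resolve_left ?_)
    exact List.append_ne_nil_of_left_ne_nil hu0 w'
  · rcases List.append_eq_append_iff.mp hs with ⟨t, rfl, ht⟩ | ⟨t, rfl, -⟩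
    · rw [List.prod_append] at hp
      refine absurd ((A.mul_mem_cancel_right ?_).mp hp) hu
      refine A.list_prod_mem fun z hz => ?_
      exact List.eq_of_mem_replicate (ht ▸ List.mem_append_left s hz) ▸ c.2
    · refine .inl ((hb p (t ++ w) (by rw [h, List.append_assoc]) hp).resolve_right fun h0 => hu ?_)
      rwa [(List.append_eq_nil_iff.mp h0).1, List.append_nil]

theorem exists_insertPow_word_eq {u' w' : List G} (h' : b.word = u' ++ w') :
    ∃ u'' w'', (b.insertPow c j h).word = u'' ++ w'' ∧ (u''.prod : G ⧸ A) = u'.prod := by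
  rcases List.append_eq_append_iff.mp (h.symm.trans h') with ⟨s, rfl, rfl⟩ | ⟨s, rfl, rfl⟩
  · exact ⟨u ++ List.replicate j (c : G) ++ s, w', by simp [insertPow],
      mk_prod_append_replicate_append c u s j⟩
  · exact ⟨u', s ++ List.replicate j (c : G) ++ w, by simp [insertPow], rfl⟩

end Block

/-- A collection of indecomposable blocks whose prefixes represent every nontrivial coset of
`A`. -/
structure IsCover (N : Multiset (Block A)) : Prop where
  indecomposable : ∀ b ∈ N, b.Indecomposable
  visits : ∀ g ∉ A, ∃ b ∈ N, ∃ u w, b.word = u ++ w ∧ (u.prod : G ⧸ A) = g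

/-- The commutator `g * c * g⁻¹ * c⁻¹`, as an element of the normal subgroup `A` containing `c`. -/
def conjComm (c : A) (g : G) : A := MulAut.conjNormal g c * c⁻¹

theorem conjNormal_eq_conjComm_mul (c : A) (g : G) :
    MulAut.conjNormal g c = conjComm c g * c := by
  rw [conjComm, inv_mul_cancel_right]

variable [IsMulCommutative A]

open scoped IsMulCommutative

variable {c : A} {g h : G}

theorem conjComm_congr (hgh : (g : G ⧸ A) = h) : conjComm c g = conjComm c h := by
  obtain ⟨a, ha, rfl⟩ : ∃ a ∈ A, h = g * a :=
    ⟨g⁻¹ * h, QuotientGroup.eq.mp hgh, by rw [mul_inv_cancel_left]⟩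
  have hac : MulAut.conjNormal a c = c := by
    have hcomm := congrArg Subtype.val (mul_comm ⟨a, ha⟩ c)
    exact Subtype.ext (by
      rw [MulAut.conjNormal_apply, mul_inv_eq_iff_eq_mul]
      exact hcomm)
  rw [conjComm, conjComm, map_mul, MulAut.mul_apply, hac]

theorem mk_eq_of_conjComm_eq (hself : Subgroup.centralizer (A : Set G) ≤ A)
    (hc : ∀ a : A, a ∈ Subgroup.zpowers c) (hgh : conjComm c g = conjComm c h) :
    (g : G ⧸ A) = h := by
  have hfix : MulAut.conjNormal (g⁻¹ * h) c = c := by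
    rw [map_mul, map_inv, MulAut.mul_apply, ← mul_right_cancel hgh, MulAut.inv_apply_self]
  refine QuotientGroup.eq.mpr (hself (Subgroup.mem_centralizer_iff.mpr fun a ha => ?_))
  obtain ⟨n, hn⟩ := Subgroup.mem_zpowers_iff.mp (hc ⟨a, ha⟩)
  have hfix' : MulAut.conjNormal (g⁻¹ * h) (⟨a, ha⟩ : A) = ⟨a, ha⟩ := by
    rw [← hn, map_zpow, hfix]
  rw [Subtype.ext_iff, MulAut.conjNormal_apply] at hfix'
  exact (mul_inv_eq_iff_eq_mul.mp hfix').symm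

theorem IsCover.exists_insert {N : Multiset (Block A)} (hN : IsCover N) (hg : g ∉ A) (c : A) :
    ∃ N' : Multiset (Block A), IsCover N' ∧ Multiset.card N' = Multiset.card N ∧
      N'.bind Block.terms = (c : G) ::ₘ N.bind Block.terms ∧
      (N'.map Block.prod).prod = conjComm c g * c * (N.map Block.prod).prod := by
  obtain ⟨b, hb, u, w, hword, hu⟩ := hN.visits g hg
  obtain ⟨N, rfl⟩ := Multiset.exists_cons_of_mem hb
  have hu' : u.prod ∉ A := by
    rwa [← QuotientGroup.eq_one_iff, hu, QuotientGroup.eq_one_iff]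
  refine ⟨b.insertPow c 1 hword ::ₘ N, ⟨?_, fun x hx => ?_⟩, by simp, ?_, ?_⟩
  · have := hN.indecomposable
    simp only [Multiset.forall_mem_cons] at this ⊢
    exact ⟨this.1.insertPow hword hu', this.2⟩
  · obtain ⟨b', hb', u', w', hword', hx'⟩ := hN.visits x hx
    rcases Multiset.mem_cons.mp hb' with rfl | hb'
    · obtain ⟨u'', w'', hword'', hu''⟩ :=
        Block.exists_insertPow_word_eq (c := c) (j := 1) hword hword'
      exact ⟨_, Multiset.mem_cons_self _ _, u'', w'', hword'', hu''.trans hx'⟩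
    · exact ⟨b', Multiset.mem_cons_of_mem hb', u', w', hword', hx'⟩
  · simp [Block.terms_insertPow]
  · rw [Multiset.map_cons, Multiset.prod_cons, Block.prod_insertPow, pow_one,
      conjNormal_eq_conjComm_mul, conjComm_congr hu, Multiset.map_cons, Multiset.prod_cons,
      mul_assoc]

theorem IsCover.exists_insert_multiset {N : Multiset (Block A)} (hN : IsCover N) (c : A)
    {Γ : Multiset G} (hΓ : ∀ g ∈ Γ, g ∉ A) :
    ∃ N' : Multiset (Block A), IsCover N' ∧ Multiset.card N' = Multiset.card N ∧
      N'.bind Block.terms = Multiset.replicate (Multiset.card Γ) (c : G) + N.bind Block.terms ∧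
      (N'.map Block.prod).prod =
        (Γ.map (conjComm c)).prod * c ^ Multiset.card Γ * (N.map Block.prod).prod := by
  induction Γ using Multiset.induction with
  | empty => exact ⟨N, hN, by simp⟩
  | cons g Γ ih =>
    simp only [Multiset.forall_mem_cons] at hΓ
    obtain ⟨N₁, hN₁, hcard₁, hterms₁, hprod₁⟩ := ih hΓ.2
    obtain ⟨N', hN', hcard, hterms, hprod⟩ := hN₁.exists_insert hΓ.1 c
    refine ⟨N', hN', hcard.trans hcard₁, ?_, ?_⟩
    · rw [hterms, hterms₁, Multiset.card_cons, Multiset.replicate_succ, Multiset.cons_add]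
    · rw [hprod, hprod₁, Multiset.map_cons, Multiset.prod_cons, Multiset.card_cons, pow_succ]
      simp only [mul_assoc, mul_left_comm, mul_comm]

end Insertion

section NormalForm

variable {G : Type*} [Group G] {A : Subgroup G}

namespace Block

/-- The one-letter block `c`. -/
def single (c : A) : Block A := ⟨[(c : G)], by simp, by simp⟩

variable (c : A)

theorem prod_single : (single c).prod = c := Subtype.ext (by simp [single, prod])

theorem terms_single : (single c).terms = {(c : G)} := rfl

theorem indecomposable_single : (single c).Indecomposable := fun _ _ h _ =>
  (List.singleton_eq_append_iff.mp h).imp And.left And.right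

end Block

/-- An indecomposable block with product `c`, together with a proper factorization of its word. -/
structure Cut (c : A) where
  block : Block A
  indecomposable : block.Indecomposable
  prod_eq : block.prod = c
  left : List G
  right : List G
  word_eq : block.word = left ++ right
  left_notMem : left.prod ∉ A

theorem Cut.prod_right_append_left {c : A} (q : Cut c) :
    (q.right ++ q.left).prod = q.left.prod⁻¹ * c * q.left.prod := by
  have hc : (c : G) = q.left.prod * q.right.prod := by
    rw [← List.prod_append, ← q.word_eq]
    exact congrArg Subtype.val q.prod_eq.symm
  rw [hc, List.prod_append]
  group

variable [A.Normal] {c : A}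

namespace Cut

/-- The factor by which inserting a further `c` at the cut changes the product of the block,
apart from the factor `c` itself. -/
def hostShift (q : Cut c) : A := conjComm c q.left.prod

/-- The factor by which rotating the word at the cut changes the product of the block. -/
def rotShift (q : Cut c) : A := conjComm c q.left.prod⁻¹

/-- The block obtained by rotating the word of `q` at the cut. -/
def rotate (q : Cut c) : Block A where
  word := q.right ++ q.left
  ne_nil h0 := q.left_notMem (by simp_all)
  prod_mem := by
    rw [q.prod_right_append_left]
    exact ‹A.Normal›.conj_mem' c c.2 _

theorem prod_rotate (q : Cut c) : q.rotate.prod = q.rotShift * c := by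
  rw [rotShift, ← conjNormal_eq_conjComm_mul]
  refine Subtype.ext (q.prod_right_append_left.trans ?_)
  rw [MulAut.conjNormal_apply, inv_inv]

theorem terms_rotate (q : Cut c) : q.rotate.terms = q.block.terms := by
  rw [Block.terms, Block.terms, q.word_eq, rotate, Multiset.coe_eq_coe]
  exact List.perm_append_comm

end Cut

/-- The blocks obtained from the blocks of `Q₁ + Q₂` by rotating those of `Q₁`, together with `k`
one-letter blocks `c`. -/
def rearranged (k : ℕ) (Q₁ Q₂ : Multiset (Cut c)) : Multiset (Block A) :=
  Multiset.replicate k (Block.single c) + Q₁.map Cut.rotate + Q₂.map Cut.block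

variable (k : ℕ) (Q₁ Q₂ : Multiset (Cut c))

theorem bind_terms_rearranged : (rearranged k Q₁ Q₂).bind Block.terms =
    Multiset.replicate k (c : G) + ((Q₁ + Q₂).map Cut.block).bind Block.terms := by
  have hsingle : (Multiset.replicate k (Block.single c)).bind Block.terms =
      Multiset.replicate k (c : G) := by
    induction k with
    | zero => simp
    | succ k ih =>
      rw [Multiset.replicate_succ, Multiset.cons_bind, ih, Block.terms_single,
        Multiset.singleton_add, Multiset.replicate_succ]
  simp only [rearranged, Multiset.add_bind, hsingle, Multiset.map_add, Multiset.bind_map,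
    Cut.terms_rotate, add_assoc]

theorem card_rearranged : Multiset.card (rearranged k Q₁ Q₂) =
    k + Multiset.card (Q₁ + Q₂) := by
  simp [rearranged, add_assoc]

theorem exists_mem_rearranged {k : ℕ} {Q₂ : Multiset (Cut c)} (h : k ≠ 0 ∨ Q₂ ≠ 0) :
    ∃ b ∈ rearranged k Q₁ Q₂, b.Indecomposable ∧ b.prod = c := by
  rcases h with hk | hQ₂
  · exact ⟨.single c, by simp [rearranged, Multiset.mem_replicate, hk],
      Block.indecomposable_single c, Block.prod_single c⟩
  · obtain ⟨q, hq⟩ := Multiset.exists_mem_of_ne_zero hQ₂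
    exact ⟨q.block, Multiset.mem_add.mpr (.inr (Multiset.mem_map_of_mem _ hq)),
      q.indecomposable, q.prod_eq⟩

open scoped IsMulCommutative

theorem prod_map_prod_rearranged [IsMulCommutative A] :
    ((rearranged k Q₁ Q₂).map Block.prod).prod =
      (Q₁.map Cut.rotShift).prod * c ^ (k + Multiset.card (Q₁ + Q₂)) := by
  simp only [rearranged, Multiset.map_add, Multiset.prod_add, Multiset.map_replicate,
    Multiset.prod_replicate, Block.prod_single, Multiset.map_map, Function.comp_def,
    Cut.prod_rotate, Cut.prod_eq, Multiset.prod_map_mul, Multiset.map_const', Multiset.card_add,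
    pow_add]
  simp only [mul_assoc, mul_left_comm]

variable {k : ℕ} {Q Q' Q₁ Q₂ : Multiset (Cut c)} {v : Cut c} {g h : G}

variable (c k Q) in
/-- The blocks of `Q` and `k` letters `c` form a full atom which as a sequence over `A` is
`c ^ |A|`, the blocks visit all cosets of `A`, and conjugation of `c` separates these cosets. -/
structure IsNormalForm : Prop where
  isFullAtom :
    IsFullAtom (Multiset.replicate k (c : G) + (Q.map Cut.block).bind Block.terms)
  card_eq : k + Multiset.card Q = Nat.card A
  orderOf_eq : orderOf c = Nat.card A
  isCover : IsCover (Q.map Cut.block)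
  mk_eq_of_conjComm_eq : ∀ {g h : G}, conjComm c g = conjComm c h → (g : G ⧸ A) = h

namespace IsNormalForm

theorem congr (hQ : IsNormalForm c k Q) (h : Q'.map Cut.block = Q.map Cut.block) :
    IsNormalForm c k Q' where
  isFullAtom := by simpa only [h] using hQ.isFullAtom
  card_eq := by rw [← Multiset.card_map Cut.block, h, Multiset.card_map, hQ.card_eq]
  orderOf_eq := hQ.orderOf_eq
  isCover := by simpa only [h] using hQ.isCover
  mk_eq_of_conjComm_eq := hQ.mk_eq_of_conjComm_eq

theorem conjComm_ne_one (hQ : IsNormalForm c k Q) (hg : g ∉ A) : conjComm c g ≠ 1 := fun h1 =>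
  hg ((QuotientGroup.eq_one_iff g).mp (hQ.mk_eq_of_conjComm_eq (h := 1) (by
    rw [h1, conjComm, map_one, MulAut.one_apply, mul_inv_cancel])))

variable [IsMulCommutative A] [Finite G]

theorem prod_conjComm_ne_one (hQ : IsNormalForm c k Q) {Γ : Multiset G} (hΓ₀ : Γ ≠ 0)
    (hΓ : ∀ g ∈ Γ, g ∉ A) (hk : Multiset.card Γ ≤ k) : (Γ.map (conjComm c)).prod ≠ 1 := by
  intro h1
  obtain ⟨j, rfl⟩ := Nat.exists_eq_add_of_le' hk
  obtain ⟨N, hN, hcard, hterms, hprod⟩ := hQ.isCover.exists_insert_multiset c hΓ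
  have hfull := Block.isFullAtom_map_prod (M := rearranged j (0 : Multiset (Cut c)) 0 + N) ?_ ?_ ?_
  · have hcardA := hfull.2
    rw [Multiset.card_map, Multiset.card_add, card_rearranged, hcard, ← hQ.card_eq,
      Multiset.card_map] at hcardA
    exact hΓ₀ (Multiset.card_eq_zero.mp (by simpa using hcardA))
  · rw [Multiset.add_bind, bind_terms_rearranged, hterms]
    simpa [Multiset.replicate_add, add_assoc] using hQ.isFullAtom
  · rw [isProductOne_iff_prod_eq_one, Multiset.map_add, Multiset.prod_add,
      prod_map_prod_rearranged, hprod, h1]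
    have hc : ((Q.map Cut.block).map Block.prod).prod = c ^ Multiset.card Q := by
      simp [Multiset.map_map, Cut.prod_eq]
    convert pow_card_eq_one' (x := c) using 1
    rw [hc, ← hQ.card_eq]
    simp [pow_add, mul_assoc]
  · intro b hb
    rcases Multiset.mem_add.mp hb with hb | hb
    · obtain rfl := Multiset.eq_of_mem_replicate (by simpa [rearranged] using hb)
      exact Block.indecomposable_single c
    · exact hN.indecomposable b hb

theorem prod_rotShift_ne_one (hQ : IsNormalForm c k (Q₁ + Q₂)) (h₁ : Q₁ ≠ 0)
    (h₂ : k ≠ 0 ∨ Q₂ ≠ 0) : (Q₁.map Cut.rotShift).prod ≠ 1 := by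
  intro h1
  obtain ⟨a, ha⟩ := Block.exists_forall_prod_eq_of_card (M := rearranged k Q₁ Q₂)
    (bind_terms_rearranged k Q₁ Q₂ ▸ hQ.isFullAtom)
    (by rw [prod_map_prod_rearranged, h1, hQ.card_eq, one_mul, pow_card_eq_one'])
    (by rw [card_rearranged, hQ.card_eq])
  obtain ⟨b, hb, -, hbc⟩ := exists_mem_rearranged Q₁ h₂
  obtain ⟨q, hq⟩ := Multiset.exists_mem_of_ne_zero h₁
  have hrot : q.rotate.prod = a :=
    ha _ (Multiset.mem_add.mpr (.inl (Multiset.mem_add.mpr (.inr (Multiset.mem_map_of_mem _ hq)))))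
  rw [← ha b hb, hbc, q.prod_rotate, mul_eq_right] at hrot
  exact hQ.conjComm_ne_one (mt A.inv_mem_iff.mp q.left_notMem) hrot

theorem hostShift_pow_mul_prod_rotShift_ne_one {j : ℕ}
    (hQ : IsNormalForm c (j + k) (v ::ₘ (Q₁ + Q₂))) (h₁ : j ≠ 0 ∨ Q₁ ≠ 0) (h₂ : k ≠ 0 ∨ Q₂ ≠ 0) :
    v.hostShift ^ j * (Q₁.map Cut.rotShift).prod ≠ 1 := by
  intro h1
  have hcard := hQ.card_eq
  rw [Multiset.card_cons] at hcard
  rcases eq_or_ne j 0 with rfl | hj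
  · rw [← Multiset.add_cons] at hQ
    exact hQ.prod_rotShift_ne_one (h₁.resolve_left (not_not.mpr rfl)) (by simp)
      (by simpa using h1)
  set b := v.block.insertPow c j v.word_eq with hb
  have hbprod : b.prod = MulAut.conjNormal v.left.prod c ^ j * c := by
    rw [hb, Block.prod_insertPow, v.prod_eq]
  obtain ⟨a, -, ha⟩ := Block.exists_orderOf_eq_card_and_forall_prod_eq
    (M := b ::ₘ rearranged k Q₁ Q₂)
    (by
      rw [Multiset.cons_bind, bind_terms_rearranged, Block.terms_insertPow]
      convert hQ.isFullAtom using 1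
      rw [Multiset.replicate_add, Multiset.map_cons, Multiset.cons_bind]
      abel)
    (by
      rw [Multiset.map_cons, Multiset.prod_cons, prod_map_prod_rearranged, hbprod,
        conjNormal_eq_conjComm_mul, ← Cut.hostShift, ← pow_card_eq_one' (x := c), ← hcard,
        ← one_mul (c ^ (j + k + _)), ← h1]
      simp only [mul_pow, pow_add, pow_one, mul_assoc, mul_left_comm, mul_comm])
  obtain ⟨b', hb', hind, hb'c⟩ := exists_mem_rearranged Q₁ h₂
  have hba := ha b (Multiset.mem_cons_self _ _) (v.indecomposable.insertPow v.word_eq v.left_notMem)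
  rw [← ha b' (Multiset.mem_cons_of_mem hb') hind, hb'c, hbprod, mul_eq_right, ← map_pow,
    map_eq_one_iff _ (MulEquiv.injective _)] at hba
  have hle := Nat.le_of_dvd (Nat.pos_of_ne_zero hj) (orderOf_dvd_of_pow_eq_one hba)
  rw [hQ.orderOf_eq] at hle
  omega

end IsNormalForm

theorem exists_eq_rearranged {M : Multiset (Block A)} (hM : ∀ b ∈ M, b.Indecomposable)
    (hc : ∀ b ∈ M, b.prod = c) : ∃ (k : ℕ) (Q : Multiset (Cut c)), M = rearranged k 0 Q := by
  induction M using Multiset.induction with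
  | empty => exact ⟨0, 0, by simp [rearranged]⟩
  | cons b M ih =>
    simp only [Multiset.forall_mem_cons] at hM hc
    obtain ⟨k, Q, rfl⟩ := ih hM.2 hc.2
    obtain ⟨x, t, hxt⟩ := List.exists_cons_of_ne_nil b.ne_nil
    rcases eq_or_ne t [] with rfl | ht
    · have hb : b = .single c := Block.ext <| by
        rw [hxt, Block.single, ← hc.1, Block.prod]
        simp only [hxt, List.prod_singleton]
      exact ⟨k + 1, Q, by simp [hb, rearranged, Multiset.replicate_succ]⟩
    · let q : Cut c := ⟨b, hM.1, hc.1, [x], t, hxt, fun hx =>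
        (hM.1 [x] t hxt hx).elim (List.cons_ne_nil x []) ht⟩
      exact ⟨k, q ::ₘ Q, by simp [q, rearranged]⟩

theorem exists_block_mk_prod_eq {L : List (Block A)} {x y : List G}
    (hxy : L.flatMap Block.word = x ++ y) (hy : y ≠ []) :
    ∃ b ∈ L, ∃ u w, b.word = u ++ w ∧ (u.prod : G ⧸ A) = x.prod := by
  induction L generalizing x with
  | nil => simp_all
  | cons b L ih =>
    rw [List.flatMap_cons, List.append_eq_append_iff] at hxy
    rcases hxy with ⟨x', rfl, hx'⟩ | ⟨w, hw, -⟩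
    · obtain ⟨b', hb', u, w, hword, hu⟩ := ih hx'
      refine ⟨b', List.mem_cons_of_mem b hb', u, w, hword, hu.trans ?_⟩
      rw [List.prod_append, QuotientGroup.mk_mul, (QuotientGroup.eq_one_iff _).mpr b.prod_mem,
        one_mul]
    · exact ⟨b, List.mem_cons_self, x, w, hw, rfl⟩

theorem exists_isNormalForm [IsMulCommutative A] [Finite G]
    (hself : Subgroup.centralizer (A : Set G) ≤ A)
    {L : List (Block A)} (hL : ∀ b ∈ L, b.Indecomposable)
    (hfull : IsFullAtom (L.flatMap Block.word : Multiset G))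
    (h1 : (L.flatMap Block.word).prod = 1) :
    ∃ (c : A) (k : ℕ) (Q : Multiset (Cut c)), IsNormalForm c k Q ∧
      ∀ b ∈ L, b.word = [(c : G)] ∨ b ∈ Q.map Cut.block := by
  have hfull' := hfull
  rw [← Block.coe_bind_terms] at hfull'
  have hfullA := Block.isFullAtom_map_prod hfull' ⟨_, rfl, Subtype.ext (by
    rw [Block.coe_prod_map_prod, h1, OneMemClass.coe_one])⟩ hL
  obtain ⟨c, hc, hrep⟩ := hfullA.eq_replicate
  obtain ⟨k, Q, hQ⟩ := exists_eq_rearranged (M := (L : Multiset (Block A))) hL fun b hb =>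
    Multiset.eq_of_mem_replicate (hrep ▸ Multiset.mem_map_of_mem Block.prod hb)
  have hmem (b) (hb : b ∈ L) : b.word = [(c : G)] ∨ b ∈ Q.map Cut.block := by
    have hb' : b ∈ rearranged k (0 : Multiset (Cut c)) Q := hQ ▸ hb
    rw [rearranged, Multiset.map_zero, add_zero, Multiset.mem_add] at hb'
    exact hb'.imp_left fun h => congrArg Block.word (Multiset.eq_of_mem_replicate h)
  have hzpowers (a : A) : a ∈ Subgroup.zpowers c := by
    rw [Subgroup.eq_top_of_card_eq (Subgroup.zpowers c) (by rw [Nat.card_zpowers, hc])]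
    exact Subgroup.mem_top a
  refine ⟨c, k, Q, ⟨?_, ?_, hc, ⟨?_, fun g hg => ?_⟩,
    mk_eq_of_conjComm_eq hself hzpowers⟩, hmem⟩
  · simpa only [hQ, bind_terms_rearranged, zero_add] using hfull'
  · have hcard := hfullA.2
    rwa [Multiset.card_map, hQ, card_rearranged, zero_add] at hcard
  · simp only [Multiset.mem_map, forall_exists_index, and_imp, forall_apply_eq_imp_iff₂]
    exact fun q _ => q.indecomposable
  · obtain ⟨x, y, hxy, hy, rfl⟩ := hfull.exists_prefix_prod_eq h1 g
    obtain ⟨b, hb, u, w, hword, hu⟩ := exists_block_mk_prod_eq hxy hy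
    refine ⟨b, (hmem b hb).resolve_left fun hsingle => hg ?_, u, w, hword, hu⟩
    rw [← QuotientGroup.eq_one_iff, ← hu, QuotientGroup.eq_one_iff]
    refine A.list_prod_mem fun z hz => ?_
    have hz' : z ∈ [(c : G)] := hsingle ▸ hword ▸ List.mem_append_left w hz
    exact List.mem_singleton.mp hz' ▸ c.2

theorem conjNormal_eq_inv [IsMulCommutative A] [Finite G]
    (hg : conjComm c g⁻¹ = conjComm c g) (hord : orderOf (conjComm c g) = Nat.card A) (a : A) :
    MulAut.conjNormal g a = a⁻¹ := by
  have hconj : MulAut.conjNormal g (conjComm c g) = (conjComm c g)⁻¹ := by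
    conv_lhs => rw [← hg]
    rw [conjComm, conjComm, map_mul, ← MulAut.mul_apply, ← map_mul, mul_inv_cancel, map_one,
      MulAut.one_apply, map_inv, mul_inv_rev, inv_inv]
  obtain ⟨n, rfl⟩ : a ∈ Subgroup.zpowers (conjComm c g) := by
    rw [Subgroup.eq_top_of_card_eq (Subgroup.zpowers _) (by rw [Nat.card_zpowers, hord])]
    exact Subgroup.mem_top a
  simp only [map_zpow, hconj, inv_zpow]

namespace IsNormalForm

variable [IsMulCommutative A]

theorem eq_hostShift_sq {q : Cut c} {x : A} (hQ : IsNormalForm c k (v ::ₘ q ::ₘ Q))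
    (hconst : ∀ q ∈ Q, q.rotShift = v.hostShift)
    (h1 : v.hostShift ^ k * (x * (Q.map Cut.rotShift).prod) = 1) : x = v.hostShift ^ 2 := by
  rw [Multiset.map_congr rfl hconst, Multiset.map_const', Multiset.prod_replicate,
    mul_left_comm, ← pow_add] at h1
  refine mul_right_cancel (h1.trans ?_)
  rw [← pow_add, ← pow_card_eq_one' (x := v.hostShift), ← hQ.card_eq]
  simp only [Multiset.card_cons]
  ring_nf

variable [Finite G]

theorem rotShift_eq_of_le {R : Multiset (Cut c)} {q w : Cut c} (hQ : IsNormalForm c k Q)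
    (hR : R ≤ Q) (hcard : Multiset.card R + 1 = Nat.card A) (hq : q ∈ R) (hw : w ∈ R) :
    q.rotShift = w.rotShift := by
  refine eq_of_forall_prod_ne_one (t := R.map Cut.rotShift) (by rw [Multiset.card_map, hcard])
    (fun s hs hs0 _ => ?_) (Multiset.mem_map_of_mem _ hq) (Multiset.mem_map_of_mem _ hw)
  obtain ⟨Q₁, hQ₁, rfl⟩ := exists_le_map_eq hs
  obtain ⟨Q₂, rfl⟩ := Multiset.le_iff_exists_add.mp (hQ₁.trans hR)
  refine hQ.prod_rotShift_ne_one (by simpa using hs0) ?_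
  have hle := Multiset.card_le_card hQ₁
  have hcard' := hQ.card_eq
  rw [Multiset.card_add] at hcard'
  by_contra! h
  rw [h.1, h.2, Multiset.card_zero] at hcard'
  omega

theorem hostShift_pow_mul_prod_eq_one_or (hQ : IsNormalForm c k (v ::ₘ Q)) (hk : k ≠ 0) :
    v.hostShift ^ k * (Q.map Cut.rotShift).prod = 1 ∨ ∀ q ∈ Q, q.rotShift = v.hostShift := by
  refine or_iff_not_imp_left.mpr fun hne q hq => ?_
  refine eq_of_forall_prod_ne_one
    (t := Multiset.replicate k v.hostShift + Q.map Cut.rotShift) ?_ (fun s hs hs0 _ h1 => ?_)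
    (Multiset.mem_add.mpr (.inr (Multiset.mem_map_of_mem _ hq)))
    (Multiset.mem_add.mpr (.inl (Multiset.mem_replicate.mpr ⟨hk, rfl⟩)))
  · rw [← hQ.card_eq]
    simp [add_assoc]
  · obtain ⟨s₁, hs₁, s₂, hs₂, rfl⟩ := exists_le_add_split hs
    obtain ⟨j, hj, rfl⟩ := Multiset.le_replicate_iff.mp hs₁
    obtain ⟨Q₁, hQ₁, rfl⟩ := exists_le_map_eq hs₂
    obtain ⟨Q₂, rfl⟩ := Multiset.le_iff_exists_add.mp hQ₁
    obtain ⟨i, rfl⟩ := Nat.exists_eq_add_of_le hj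
    rw [Multiset.prod_add, Multiset.prod_replicate] at h1
    refine hQ.hostShift_pow_mul_prod_rotShift_ne_one ?_ ?_ h1
    · by_contra! h
      simp [h.1, h.2] at hs0
    · by_contra! h
      rw [h.1, h.2, add_zero, add_zero] at hne
      exact hne h1

theorem orderOf_hostShift (hQ : IsNormalForm c k (v ::ₘ Q))
    (hconst : ∀ q ∈ Q, q.rotShift = v.hostShift) : orderOf v.hostShift = Nat.card A := by
  have hcard := hQ.card_eq
  rw [Multiset.card_cons] at hcard
  have hpos := orderOf_pos v.hostShift
  obtain ⟨e, he⟩ := orderOf_dvd_natCard v.hostShift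
  have hne1 : orderOf v.hostShift ≠ 1 :=
    mt orderOf_eq_one_iff.mp (hQ.conjComm_ne_one v.left_notMem)
  by_contra hne
  have hlt : orderOf v.hostShift + 1 < Nat.card A := by
    have he1 : e ≠ 1 := fun h => hne (by rw [he, h, mul_one])
    have he0 : e ≠ 0 := by
      rintro rfl
      exact Nat.card_pos.ne' he
    rw [he]
    nlinarith [show 2 ≤ e by omega, show 2 ≤ orderOf v.hostShift by omega]
  obtain ⟨j, hj, hjk, hjQ⟩ : ∃ j ≤ k, j ≤ orderOf v.hostShift ∧
      orderOf v.hostShift - j ≤ Multiset.card Q :=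
    ⟨min (orderOf v.hostShift) k, min_le_right _ _, min_le_left _ _, by omega⟩
  obtain ⟨Q₁, hQ₁, hcard₁⟩ := exists_le_card_eq hjQ
  obtain ⟨Q₂, rfl⟩ := Multiset.le_iff_exists_add.mp hQ₁
  obtain ⟨i, rfl⟩ := Nat.exists_eq_add_of_le hj
  rw [Multiset.card_add] at hcard
  refine hQ.hostShift_pow_mul_prod_rotShift_ne_one ?_ ?_ ?_
  · by_contra! h
    simp only [h.1, h.2, Multiset.card_zero] at hcard₁
    omega
  · by_contra! h
    simp only [h.1, h.2, Multiset.card_zero] at hcard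
    omega
  · rw [Multiset.map_congr rfl fun q hq => hconst q (Multiset.mem_of_le hQ₁ hq),
      Multiset.map_const', Multiset.prod_replicate, hcard₁, ← pow_add, Nat.add_sub_cancel' hjk,
      pow_orderOf_eq_one]

theorem rotShift_eq_hostShift_and_eq_sq {q₁ q₂ : Cut c}
    (hQ : IsNormalForm c k (v ::ₘ q₁ ::ₘ Q)) (hk : k ≠ 0) (hblock : q₂.block = q₁.block)
    (hne : q₁.rotShift ≠ q₂.rotShift) :
    (∀ q ∈ Q, q.rotShift = v.hostShift) ∧ orderOf v.hostShift = Nat.card A ∧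
      (q₁.rotShift = v.hostShift ∧ q₂.rotShift = v.hostShift ^ 2 ∨
        q₂.rotShift = v.hostShift ∧ q₁.rotShift = v.hostShift ^ 2) := by
  have hQ' : IsNormalForm c k (v ::ₘ q₂ ::ₘ Q) := hQ.congr (by simp [hblock])
  have h₁ := hQ.hostShift_pow_mul_prod_eq_one_or hk
  have h₂ := hQ'.hostShift_pow_mul_prod_eq_one_or hk
  simp only [Multiset.map_cons, Multiset.prod_cons] at h₁ h₂
  rcases h₁ with h₁ | h₁ <;> rcases h₂ with h₂ | h₂
  · exact absurd (mul_right_cancel (mul_left_cancel (h₁.trans h₂.symm))) hne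
  · have hord := hQ'.orderOf_hostShift h₂
    rw [Multiset.forall_mem_cons] at h₂
    exact ⟨h₂.2, hord, .inr ⟨h₂.1, hQ.eq_hostShift_sq h₂.2 h₁⟩⟩
  · have hord := hQ.orderOf_hostShift h₁
    rw [Multiset.forall_mem_cons] at h₁
    exact ⟨h₁.2, hord, .inl ⟨h₁.1, hQ'.eq_hostShift_sq h₁.2 h₂⟩⟩
  · rw [Multiset.forall_mem_cons] at h₁ h₂
    exact absurd (h₁.1.trans h₂.1.symm) hne

theorem lt_of_conjComm_eq_sq (hQ : IsNormalForm c k Q) (hg : g ∉ A) (hh : h ∉ A)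
    (hgh : conjComm c h = conjComm c g ^ 2) : k < Nat.card A / 2 + Nat.card A % 2 := by
  by_contra! hle
  have hpos : 0 < Nat.card A := Nat.card_pos
  refine hQ.prod_conjComm_ne_one (Γ := Multiset.replicate (Nat.card A / 2) h +
    Multiset.replicate (Nat.card A % 2) g) ?_ ?_ (by simpa using hle) ?_
  · rw [← Multiset.card_pos, Multiset.card_add, Multiset.card_replicate, Multiset.card_replicate]
    omega
  · intro x hx
    rcases Multiset.mem_add.mp hx with hx | hx <;> rwa [Multiset.eq_of_mem_replicate hx]
  · rw [Multiset.map_add, Multiset.prod_add, Multiset.map_replicate, Multiset.map_replicate,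
      Multiset.prod_replicate, Multiset.prod_replicate, hgh, ← pow_mul, ← pow_add,
      Nat.div_add_mod, pow_card_eq_one']

theorem conjComm_ne_sq_of_conjNormal_eq_inv (hQ : IsNormalForm c k Q) (hk : 2 ≤ k) (hg : g ∉ A)
    (hinv : ∀ a : A, MulAut.conjNormal g a = a⁻¹) : conjComm c h ≠ conjComm c g ^ 2 := by
  intro hh
  have hcg : conjComm c g = c⁻¹ * c⁻¹ := by rw [conjComm, hinv]
  have hcgh : conjComm c (g * h) = (conjComm c g)⁻¹ := by
    rw [conjComm, map_mul, MulAut.mul_apply, conjNormal_eq_conjComm_mul c h, hinv, hh, hcg]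
    group
  refine hQ.prod_conjComm_ne_one (Γ := {g, g * h}) (by simp) ?_ (by simpa using hk) ?_
  · have hgh : g * h ∉ A := fun hmem => hQ.conjComm_ne_one hg <| inv_eq_one.mp <| by
      rw [← hcgh, conjComm_congr (h := 1) ((QuotientGroup.eq_one_iff _).mpr hmem), conjComm,
        map_one, MulAut.one_apply, mul_inv_cancel]
    simpa using ⟨hg, hgh⟩
  · simp [hcgh]

theorem rotShift_eq_of_two_le {q₁ q₂ : Cut c} (hQ : IsNormalForm c k (v ::ₘ q₁ ::ₘ Q))
    (hk : 2 ≤ k) (hblock : q₂.block = q₁.block) : q₁.rotShift = q₂.rotShift := by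
  by_contra hne
  have hk0 : k ≠ 0 := by omega
  wlog hsq : q₂.rotShift = v.hostShift ^ 2 generalizing q₁ q₂
  · obtain ⟨-, -, ⟨-, h⟩ | ⟨-, h⟩⟩ := hQ.rotShift_eq_hostShift_and_eq_sq hk0 hblock hne
    · exact hsq h
    · exact this (hQ.congr (by simp [hblock])) hblock.symm (Ne.symm hne) h
  obtain ⟨hconst, hord, hcases⟩ := hQ.rotShift_eq_hostShift_and_eq_sq hk0 hblock hne
  have hq₁ : q₁.rotShift = v.hostShift :=
    hcases.elim And.left fun h => absurd (h.2.trans hsq.symm) hne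
  have hq₂ : q₂.left.prod⁻¹ ∉ A := mt A.inv_mem_iff.mp q₂.left_notMem
  have hlt := hQ.lt_of_conjComm_eq_sq v.left_notMem hq₂ hsq
  have hcard := hQ.card_eq
  simp only [Multiset.card_cons] at hcard
  obtain ⟨w, hw⟩ := Multiset.card_pos_iff_exists_mem.mp (show 0 < Multiset.card Q by omega)
  obtain ⟨Q', rfl⟩ := Multiset.exists_cons_of_mem hw
  have hQ' : IsNormalForm c k (w ::ₘ q₁ ::ₘ v ::ₘ Q') := by
    rwa [Multiset.cons_swap q₁ v, Multiset.cons_swap w v, Multiset.cons_swap w q₁]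
  obtain ⟨-, hord', hcases'⟩ := hQ'.rotShift_eq_hostShift_and_eq_sq hk0 hblock hne
  have hvw : v.hostShift = w.hostShift := by
    rcases hcases' with ⟨h, -⟩ | ⟨h₂, h₁⟩
    · rw [← hq₁, h]
    · have hcube : v.hostShift ^ 3 = 1 := by
        rw [hq₁, ← h₂, hsq, ← pow_mul] at h₁
        exact mul_left_cancel (a := v.hostShift) (by rw [← pow_succ', mul_one, h₁.symm])
      have := Nat.le_of_dvd three_pos (orderOf_dvd_of_pow_eq_one hcube)
      omega
  have hinv := conjNormal_eq_inv ((hconst w hw).trans hvw) hord'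
  exact hQ.conjComm_ne_sq_of_conjNormal_eq_inv hk w.left_notMem hinv (hvw ▸ hsq)

theorem rotShift_eq_of_le_one {q₁ q₂ : Cut c} (hQ : IsNormalForm c k (q₁ ::ₘ Q)) (hk : k ≤ 1)
    (hcardA : 2 < Nat.card A) (hblock : q₂.block = q₁.block) : q₁.rotShift = q₂.rotShift := by
  have hcard := hQ.card_eq
  rw [Multiset.card_cons] at hcard
  obtain ⟨R, hR, hcardR⟩ := exists_le_card_eq (s := Q) (n := Nat.card A - 2) (by omega)
  obtain ⟨w, hw⟩ := Multiset.card_pos_iff_exists_mem.mp (show 0 < Multiset.card R by omega)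
  have rotShift_eq {q : Cut c} (hq : q.block = q₁.block) : q.rotShift = w.rotShift :=
    (hQ.congr (Q' := q ::ₘ Q) (by simp [hq])).rotShift_eq_of_le (R := q ::ₘ R)
      (Multiset.cons_le_cons q hR) (by rw [Multiset.card_cons]; omega)
      (Multiset.mem_cons_self q R) (Multiset.mem_cons_of_mem hw)
  rw [rotShift_eq rfl, rotShift_eq hblock]

theorem conjComm_eq_of_card_eq_one (hQ : IsNormalForm c k Q) (hcard : Multiset.card Q = 1)
    (hcardA : 2 < Nat.card A) (hg : g ∉ A) (hh : h ∉ A) : conjComm c g = conjComm c h := by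
  have hkA := hQ.card_eq
  obtain ⟨j, rfl⟩ := Nat.exists_eq_add_of_le' (show 2 ≤ k by omega)
  refine eq_of_forall_prod_ne_one (t := (g ::ₘ Multiset.replicate (j + 1) h).map (conjComm c))
    (by simp [← hkA, hcard]) (fun s hs hs0 _ => ?_) (by simp) (by simp)
  obtain ⟨Γ, hΓ, rfl⟩ := exists_le_map_eq hs
  refine hQ.prod_conjComm_ne_one (by simpa using hs0) (fun x hx => ?_)
    ((Multiset.card_le_card hΓ).trans (by simp))
  rcases Multiset.mem_cons.mp (Multiset.mem_of_le hΓ hx) with rfl | hx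
  exacts [hg, Multiset.eq_of_mem_replicate hx ▸ hh]

theorem mk_left_eq_of_block_eq {q₁ q₂ : Cut c} (hQ : IsNormalForm c k (q₁ ::ₘ Q))
    (hblock : q₂.block = q₁.block) : (q₁.left.prod : G ⧸ A) = q₂.left.prod := by
  by_contra hne
  have hconj : conjComm c q₁.left.prod ≠ conjComm c q₂.left.prod :=
    mt hQ.mk_eq_of_conjComm_eq hne
  have hrot : q₁.rotShift ≠ q₂.rotShift := fun h => hne <| inv_injective <| by
    simpa only [QuotientGroup.mk_inv] using hQ.mk_eq_of_conjComm_eq h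
  have hcardA : 2 < Nat.card A := by
    have := Fintype.ofFinite A
    rw [Nat.card_eq_fintype_card]
    exact Fintype.two_lt_card_iff.mpr ⟨1, _, _, (hQ.conjComm_ne_one q₁.left_notMem).symm,
      (hQ.conjComm_ne_one q₂.left_notMem).symm, hconj⟩
  rcases eq_or_ne Q 0 with rfl | hQ₀
  · exact hconj (hQ.conjComm_eq_of_card_eq_one (by simp) hcardA q₁.left_notMem q₂.left_notMem)
  rcases le_or_gt k 1 with hk | hk
  · exact hrot (hQ.rotShift_eq_of_le_one hk hcardA hblock)
  · obtain ⟨v, hv⟩ := Multiset.exists_mem_of_ne_zero hQ₀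
    obtain ⟨Q, rfl⟩ := Multiset.exists_cons_of_mem hv
    rw [Multiset.cons_swap] at hQ
    exact hrot (hQ.rotShift_eq_of_two_le hk hblock)

end IsNormalForm

end NormalForm

/- The hypothesis says that, as long as `f` does not return to `f a`, it stays at `f (a + 1)`. -/
theorem exists_forall_eq_or_eq_of_excursions {α : Type*} {f : ℕ → α} {n : ℕ}
    (h : ∀ a b, a < b → b ≤ n → (∀ t, a < t → t ≤ b → f t ≠ f a) → f (a + 1) = f b) :
    ∃ a ≤ n, (∀ i ≤ n, f i = f a ∨ f i = f n) ∧ ∀ t, a < t → t ≤ n → f t = f n := by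
  induction n with
  | zero => exact ⟨0, le_rfl, fun i hi => .inr (by rw [Nat.le_zero.mp hi]), by omega⟩
  | succ n ih =>
    obtain ⟨a, han, hval, hlast⟩ := ih fun a b hab hb => h a b hab (by omega)
    by_cases hn : f (n + 1) = f n
    · refine ⟨a, by omega, fun i hi => ?_, fun t ht hle => ?_⟩ <;> rw [hn]
      · rcases Nat.of_le_succ hi with hi | rfl
        exacts [hval i hi, .inr hn]
      · rcases Nat.of_le_succ hle with hle | rfl
        exacts [hlast t ht hle, hn]
    have hfa : f a = f n ∨ f a = f (n + 1) := by
      by_contra! hne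
      have han' : a < n := lt_of_le_of_ne han (hne.1 <| congrArg f ·)
      refine hn ((h a (n + 1) (by omega) le_rfl fun t ht hle => ?_).symm.trans
        (hlast (a + 1) (by omega) (by omega)))
      rcases Nat.of_le_succ hle with hle | rfl
      exacts [hlast t ht hle ▸ hne.1.symm, hne.2.symm]
    refine ⟨n, by omega, fun i hi => ?_, fun t ht hle => ?_⟩
    · rcases Nat.of_le_succ hi with hi | rfl
      · rcases hval i hi with hi | hi
        exacts [hi ▸ hfa, .inl hi]
      · exact .inr rfl
    · rw [show t = n + 1 by omega]

section IndexTwo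

variable {G : Type*} [Group G] {A : Subgroup G} [A.Normal] [IsMulCommutative A]
  [Finite G]

theorem mk_eq_mk_prod_of_prefix_notMem (hself : Subgroup.centralizer (A : Set G) ≤ A)
    {g : G} {v y : List G} (hfull : IsFullAtom (g :: v ++ y : Multiset G))
    (h1 : (g :: v ++ y).prod = 1) (hv : ∀ u, u ≠ [] → u <+: g :: v → u.prod ∉ A) :
    (g : G ⧸ A) = ((g :: v).prod : G) := by
  obtain ⟨L, hL, hLv⟩ := Block.exists_flatMap_eq (A := A) (h1 ▸ A.one_mem)
  rw [← hLv] at hfull h1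
  obtain ⟨c, k, Q, hQ, hmem⟩ := exists_isNormalForm hself hL hfull h1
  obtain - | ⟨b, L⟩ := L
  · simp at hLv
  obtain ⟨w, hw⟩ : ∃ w, b.word = g :: v ++ w := by
    rw [List.flatMap_cons, List.append_eq_append_iff] at hLv
    rcases hLv with ⟨u, hu, -⟩ | ⟨w, hw, -⟩
    · exact absurd b.prod_mem (hv _ b.ne_nil ⟨u, hu.symm⟩)
    · exact ⟨w, hw⟩
  have hg : g ∉ A := by simpa using hv [g] (by simp) (by simp)
  have hb : b ∈ Q.map Cut.block := (hmem b List.mem_cons_self).resolve_left fun hbc => hg (by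
    rw [(List.cons.inj (hw.symm.trans hbc)).1]
    exact c.2)
  obtain ⟨q, hq, rfl⟩ := Multiset.mem_map.mp hb
  obtain ⟨Q, rfl⟩ := Multiset.exists_cons_of_mem hq
  let q₁ : Cut c := { q with left := [g], right := v ++ w, word_eq := hw, left_notMem := by simpa }
  let q₂ : Cut c :=
    { q with left := g :: v, right := w, word_eq := hw, left_notMem := hv _ (by simp) (by simp) }
  simpa [q₁, q₂] using
    (hQ.congr (Q' := q₁ ::ₘ Q) (by simp [q₁])).mk_left_eq_of_block_eq (q₂ := q₂) rfl

theorem mk_prod_take_succ_eq (hself : Subgroup.centralizer (A : Set G) ≤ A) {l : List G}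
    (hl : IsFullAtom (l : Multiset G)) (h1 : l.prod = 1) {a b : ℕ} (hab : a < b)
    (hb : b ≤ l.length)
    (hout : ∀ t, a < t → t ≤ b → ((l.take t).prod : G ⧸ A) ≠ ((l.take a).prod : G)) :
    ((l.take (a + 1)).prod : G ⧸ A) = ((l.take b).prod : G) := by
  obtain ⟨g, v, hgv⟩ := List.exists_cons_of_ne_nil (l := (l.drop a).take (b - a)) <| by
    simp only [ne_eq, List.take_eq_nil_iff, List.drop_eq_nil_iff]
    omega
  have hlen : (g :: v).length = b - a := by
    rw [← hgv, List.length_take, List.length_drop]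
    omega
  have htake (u : List G) (hu : u <+: g :: v) : l.take (a + u.length) = l.take a ++ u := by
    rw [List.take_add]
    conv_rhs => rw [List.prefix_iff_eq_take.mp hu, ← hgv, List.take_take,
      min_eq_left (hlen ▸ hu.length_le)]
  have hb' : l.take b = l.take a ++ (g :: v) := by
    rw [← htake _ List.prefix_rfl, hlen, Nat.add_sub_cancel' hab.le]
  have hsplit : l.take a ++ (g :: v ++ l.drop b) = l := by
    rw [← List.append_assoc, ← hb', List.take_append_drop]
  have hmk := mk_eq_mk_prod_of_prefix_notMem hself (g := g) (v := v) (y := l.drop b ++ l.take a)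
    (by
      rw [← List.append_assoc, Multiset.coe_eq_coe.mpr List.perm_append_comm, hsplit]
      exact hl)
    (by
      rw [← hsplit, List.prod_append] at h1
      rw [← List.append_assoc, List.prod_append, mul_eq_one_comm.mp h1])
    fun u hu0 hu hmem => hout (a + u.length) (by simpa [List.length_pos_iff] using hu0)
      (by have := hu.length_le; omega)
      (by rw [htake u hu, List.prod_append, QuotientGroup.mk_mul_of_mem _ hmem])
  rw [← List.length_singleton (a := g), htake [g] (by simp), hb', List.prod_append,
    List.prod_append, QuotientGroup.mk_mul, QuotientGroup.mk_mul, List.prod_singleton, hmk]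

theorem HasFullAtom.index_le_two (h : HasFullAtom G)
    (hself : Subgroup.centralizer (A : Set G) ≤ A) : A.index ≤ 2 := by
  obtain ⟨S, hS⟩ := h
  obtain ⟨l, rfl, h1⟩ := hS.1.1
  obtain ⟨a, -, ha, -⟩ := exists_forall_eq_or_eq_of_excursions
    (f := fun i => ((l.take i).prod : G ⧸ A)) (n := l.length) fun a b =>
      mk_prod_take_succ_eq hself hS h1
  have huniv : (Set.univ : Set (G ⧸ A)) ⊆
      {((l.take a).prod : G ⧸ A), ((l.take l.length).prod : G ⧸ A)} := fun z _ => by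
    obtain ⟨g, rfl⟩ := QuotientGroup.mk_surjective z
    obtain ⟨x, y, rfl, -, rfl⟩ := hS.exists_prefix_prod_eq h1 g
    simpa using ha x.length (by simp)
  rw [Subgroup.index, ← Set.ncard_univ]
  exact (Set.ncard_le_ncard huniv).trans ((Set.ncard_insert_le _ _).trans (by simp))

end IndexTwo

section DihedralRecognition

variable {G : Type*} [Group G] {A : Subgroup G} {s : G}

theorem exists_dihedralGroup_hom {n : ℕ} (e : Multiplicative (ZMod n) →* A) (hs : s * s = 1)
    (hinv : ∀ a ∈ A, s * a * s⁻¹ = a⁻¹) :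
    ∃ f : DihedralGroup n →* G, ∀ i, f (.r i) = e (.ofAdd i) ∧ f (.sr i) = s * e (.ofAdd i) := by
  have swap (a : A) : (a : G) * s = s * (a : G)⁻¹ :=
    (mul_inv_eq_iff_eq_mul.mp (by simpa using hinv _ (A.inv_mem a.2))).symm
  let f : DihedralGroup n → G
    | .r i => e (.ofAdd i)
    | .sr i => s * e (.ofAdd i)
  refine ⟨MonoidHom.mk' f ?_, fun i => ⟨rfl, rfl⟩⟩
  rintro (i | i) (j | j)
  · simp [f]
  · simp only [DihedralGroup.r_mul_sr, f, ofAdd_sub, div_eq_inv_mul, map_mul, map_inv,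
      Subgroup.coe_mul, Subgroup.coe_inv]
    rw [← mul_assoc, ← mul_assoc, swap]
  · simp [f, mul_assoc]
  · simp only [DihedralGroup.sr_mul_sr, f, ofAdd_sub, div_eq_inv_mul, map_mul, map_inv,
      Subgroup.coe_mul, Subgroup.coe_inv]
    rw [mul_assoc s, ← mul_assoc _ s, swap, ← mul_assoc, ← mul_assoc, hs, one_mul]

theorem nonempty_dihedralGroup_mulEquiv_of_index_eq_two [IsCyclic A] (hA : A.index = 2)
    (hsA : s ∉ A) (hs : s * s = 1) (hinv : ∀ a ∈ A, s * a * s⁻¹ = a⁻¹) :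
    Nonempty (DihedralGroup (Nat.card A) ≃* G) := by
  let e := zmodCyclicMulEquiv (G := A) inferInstance
  obtain ⟨f, hf⟩ := exists_dihedralGroup_hom e.toMonoidHom hs hinv
  refine ⟨MulEquiv.ofBijective f ⟨(injective_iff_map_eq_one f).mpr ?_, fun g => ?_⟩⟩
  · rintro (i | i) hi
    · rw [(hf i).1] at hi
      rw [DihedralGroup.one_def, ← ofAdd_eq_one.mp (e.map_eq_one_iff.mp (Subtype.ext hi))]
    · rw [(hf i).2] at hi
      exact absurd (eq_inv_of_mul_eq_one_left hi ▸ A.inv_mem (SetLike.coe_mem _)) hsA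
  · by_cases hg : g ∈ A
    · exact ⟨.r (e.symm ⟨g, hg⟩).toAdd, by simp [hf]⟩
    · have hsg : s * g ∈ A := (Subgroup.mul_mem_iff_of_index_two hA).mpr (by simp [hsA, hg])
      exact ⟨.sr (e.symm ⟨s * g, hsg⟩).toAdd, by simp [hf, ← mul_assoc, hs]⟩

end DihedralRecognition

section Classification

variable {G : Type*} [Group G]

namespace IsNormalForm

variable {A : Subgroup G} [A.Normal] [IsMulCommutative A] [Finite G] {c : A} {k : ℕ}
  {Q : Multiset (Cut c)} {v : Cut c}

open scoped IsMulCommutative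

theorem orderOf_hostShift_of_index_eq_two (hQ : IsNormalForm c k (v ::ₘ Q)) (hA : A.index = 2) :
    orderOf v.hostShift = Nat.card A ∧ ∀ a : A, MulAut.conjNormal v.left.prod a = a⁻¹ := by
  have rotShift_eq (q : Cut c) : q.rotShift = v.hostShift := conjComm_congr <| by
    rw [QuotientGroup.eq, inv_inv, Subgroup.mul_mem_iff_of_index_two hA]
    simp [q.left_notMem, v.left_notMem]
  have hord := hQ.orderOf_hostShift fun q _ => rotShift_eq q
  exact ⟨hord, conjNormal_eq_inv (rotShift_eq v) hord⟩

end IsNormalForm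

theorem mul_self_eq_one_of_conjNormal_eq_inv {A : Subgroup G} [A.Normal] {g : G}
    (hg : ∀ a : A, MulAut.conjNormal g a = a⁻¹) (hgA : g * g ∈ A) (hodd : Odd (Nat.card A)) :
    g * g = 1 := by
  have hinv : (⟨g * g, hgA⟩ : A) = (⟨g * g, hgA⟩ : A)⁻¹ := by
    rw [← hg]
    exact Subtype.ext (by simp [mul_assoc])
  have h2 : (⟨g * g, hgA⟩ : A) ^ 2 = 1 := by rw [pow_two, ← mul_eq_one_iff_eq_inv.mpr hinv]
  have h1 := pow_gcd_eq_one.mpr ⟨h2, pow_card_eq_one' (G := A)⟩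
  rw [(Nat.coprime_two_left.mpr hodd).gcd_eq_one, pow_one] at h1
  exact congrArg Subtype.val h1

theorem HasFullAtom.exists_mulEquiv_dihedralGroup [Finite G] {A : Subgroup G} [A.Normal]
    [IsMulCommutative A] (h : HasFullAtom G) (hself : Subgroup.centralizer (A : Set G) ≤ A)
    (hA : A ≠ ⊤) : ∃ n, Odd n ∧ 3 ≤ n ∧ Nonempty (G ≃* DihedralGroup n) := by
  have hindex : A.index = 2 := by
    have := h.index_le_two hself
    have := mt Subgroup.index_eq_one.mp hA
    have := A.index_ne_zero_of_finite
    omega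
  obtain ⟨S, hS⟩ := h
  obtain ⟨l, rfl, h1⟩ := hS.1.1
  obtain ⟨L, hL, rfl⟩ := Block.exists_flatMap_eq (A := A) (h1 ▸ A.one_mem)
  obtain ⟨c, k, Q, hQ, -⟩ := exists_isNormalForm hself hL hS h1
  obtain ⟨g, hg⟩ := SetLike.exists_not_mem_of_ne_top A hA
  obtain ⟨b, hb, -⟩ := hQ.isCover.visits g hg
  obtain ⟨v, hv, -⟩ := Multiset.mem_map.mp hb
  obtain ⟨Q, rfl⟩ := Multiset.exists_cons_of_mem hv
  obtain ⟨hord, hinv⟩ := hQ.orderOf_hostShift_of_index_eq_two hindex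
  have hshift : v.hostShift = (c ^ 2)⁻¹ := by
    rw [Cut.hostShift, conjComm, hinv, pow_two, mul_inv_rev]
  have hodd : Odd (Nat.card A) := by
    rw [hshift, orderOf_inv, orderOf_pow, hQ.orderOf_eq, Nat.div_eq_self] at hord
    exact Nat.coprime_two_right.mp (hord.resolve_left Nat.card_pos.ne')
  have hne1 : Nat.card A ≠ 1 := fun hone =>
    hQ.conjComm_ne_one v.left_notMem (orderOf_eq_one_iff.mp (hord.trans hone))
  have hsq := mul_self_eq_one_of_conjNormal_eq_inv hinv
    (Subgroup.mul_self_mem_of_index_two hindex _) hodd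
  have : IsCyclic A := isCyclic_of_orderOf_eq_card c hQ.orderOf_eq
  obtain ⟨e⟩ := nonempty_dihedralGroup_mulEquiv_of_index_eq_two hindex v.left_notMem hsq
    fun a ha => by simpa using congrArg Subtype.val (hinv ⟨a, ha⟩)
  refine ⟨Nat.card A, hodd, ?_, ⟨e.symm⟩⟩
  obtain ⟨j, hj⟩ := hodd
  omega

theorem exists_normal_isMulCommutative_centralizer_le [Finite G] [IsMulCommutative (commutator G)] :
    ∃ A : Subgroup G, A.Normal ∧ IsMulCommutative A ∧ Subgroup.centralizer (A : Set G) ≤ A := by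
  obtain ⟨A, hA, hmax⟩ := (Set.toFinite {K : Subgroup G | commutator G ≤ K ∧
    IsMulCommutative K}).exists_le_maximal ⟨le_rfl, inferInstance⟩
  have hcomm : IsMulCommutative A := hmax.prop.2
  refine ⟨A, Subgroup.Normal.of_commutator_le G hA, hcomm, fun g hg => ?_⟩
  have hclosure : IsMulCommutative (Subgroup.closure (insert g (A : Set G))) := by
    refine Subgroup.isMulCommutative_closure ?_
    rintro x (rfl | hx) y (rfl | hy)
    · rfl
    · exact (hg y hy).symm
    · exact hg x hx
    · exact setLike_mul_comm hx hy
  have hle : A ≤ Subgroup.closure (insert g (A : Set G)) :=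
    fun a ha => Subgroup.subset_closure (Set.mem_insert_of_mem _ ha)
  exact hmax.le_of_ge ⟨hA.trans hle, hclosure⟩ hle (Subgroup.subset_closure (Set.mem_insert _ _))

theorem HasFullAtom.isCyclic_or_exists_mulEquiv_of_isMulCommutative_commutator [Finite G]
    [IsMulCommutative (commutator G)] (h : HasFullAtom G) :
    IsCyclic G ∨ ∃ n, Odd n ∧ 3 ≤ n ∧ Nonempty (G ≃* DihedralGroup n) := by
  obtain ⟨A, _, _, hself⟩ := exists_normal_isMulCommutative_centralizer_le (G := G)
  have hA : IsCyclic A := h.isCyclic_of_isMulCommutative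
  obtain rfl | hne := eq_or_ne A ⊤
  · exact Or.inl (Subgroup.topEquiv.isCyclic.mp hA)
  · exact Or.inr (h.exists_mulEquiv_dihedralGroup hself hne)

theorem HasFullAtom.isCyclic_of_card_eq_prime_pow {p : ℕ} [hp : Fact p.Prime] {n : ℕ} [Finite G]
    (hcard : Nat.card G = p ^ n) (h : HasFullAtom G) : IsCyclic G := by
  induction n generalizing G with
  | zero =>
    have := (Nat.card_eq_one_iff_unique.mp (by simpa using hcard)).1
    infer_instance
  | succ n ih =>
    obtain ⟨M, hM⟩ := Sylow.exists_subgroup_card_pow_prime (G := G) p (n := n)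
      (hcard ▸ pow_dvd_pow p n.le_succ)
    have hindex : M.index = p := by
      have hmul := M.card_mul_index
      rw [hM, hcard, pow_succ] at hmul
      exact Nat.eq_of_mul_eq_mul_left (pow_pos hp.out.pos n) hmul
    have : M.Normal := Subgroup.normal_of_index_eq_minFac_card <| by
      rw [hindex, hcard, hp.out.pow_minFac n.succ_ne_zero]
    have : IsCyclic M := ih hM (h.subgroup M)
    have : IsCyclic (G ⧸ M) := isCyclic_of_prime_card (p := p) hindex
    have hle : commutator G ≤ M :=
      Subgroup.Normal.quotient_commutative_iff_commutator_le.mp inferInstance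
    have : IsMulCommutative (commutator G) := .of_setLike_mul_comm fun a ha b hb =>
      setLike_mul_comm (hle ha) (hle hb)
    obtain hG | ⟨m, hodd, hm, ⟨e⟩⟩ := h.isCyclic_or_exists_mulEquiv_of_isMulCommutative_commutator
    · exact hG
    · have : Nontrivial G := Finite.one_lt_card_iff_nontrivial.mp <| by
        rw [hcard]
        exact Nat.one_lt_pow n.succ_ne_zero hp.out.one_lt
      have := (IsPGroup.of_card hcard).center_nontrivial
      have := (Subgroup.centerCongr e).symm.toEquiv.nontrivial
      exact absurd (DihedralGroup.center_eq_bot_of_odd_ne_one hodd (by omega))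
        ((Subgroup.nontrivial_iff_ne_bot _).mp this)

theorem HasFullAtom.isCyclic_or_exists_mulEquiv_dihedralGroup [Finite G] (h : HasFullAtom G) :
    IsCyclic G ∨ ∃ n, Odd n ∧ 3 ≤ n ∧ Nonempty (G ≃* DihedralGroup n) := by
  have : IsZGroup G := ⟨fun p hp P => by
    have : Fact p.Prime := ⟨hp⟩
    obtain ⟨n, hn⟩ := IsPGroup.iff_card.mp P.isPGroup'
    exact (h.subgroup P).isCyclic_of_card_eq_prime_pow hn⟩
  have : IsCyclic (commutator G) := IsZGroup.isCyclic_commutator G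
  exact h.isCyclic_or_exists_mulEquiv_of_isMulCommutative_commutator

end Classification

section Existence

variable {G : Type*} [Group G]

theorem isProductOne_nsmul {l : List G} {k : ℕ} (hl : l.prod ^ k = 1) :
    IsProductOne (k • (l : Multiset G)) := by
  refine ⟨(List.replicate k l).flatten, ?_, by simpa using hl⟩
  rw [← Multiset.coe_join, List.map_replicate, Multiset.coe_replicate, Multiset.join]
  simp

theorem isPOAtom_of_card_le {S : Multiset G} (hS : IsProductOne S) (hS0 : S ≠ 0)
    (h : ∀ T₁ T₂, IsProductOne T₁ → IsProductOne T₂ → T₁ + T₂ = S → T₁ ≠ 0 →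
      Multiset.card S ≤ Multiset.card T₁ ∨ Multiset.card S ≤ Multiset.card T₂) : IsPOAtom S := by
  refine ⟨hS, hS0, fun T₁ T₂ hT₁ hT₂ hadd => or_iff_not_imp_left.mpr fun hne => ?_⟩
  have hcard := h T₁ T₂ hT₁ hT₂ hadd hne
  have := Multiset.card_pos.mpr hne
  rw [← hadd, Multiset.card_add] at hcard
  exact Multiset.card_eq_zero.mp (by omega)

theorem isPOAtom_nsmul_singleton_orderOf {g : G} (hg : IsOfFinOrder g) :
    IsPOAtom (orderOf g • ({g} : Multiset G)) := by
  refine isPOAtom_of_card_le (isProductOne_nsmul (l := [g]) (by simp [pow_orderOf_eq_one]))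
    (by simp [hg.orderOf_pos.ne']) ?_
  rintro _ T ⟨l, rfl, h1⟩ - hadd hne
  have hle : (l : Multiset G) ≤ Multiset.replicate (orderOf g) g :=
    Multiset.nsmul_singleton g _ ▸ hadd ▸ Multiset.le_add_right _ T
  rw [List.eq_replicate_of_mem fun b hb => Multiset.eq_of_mem_replicate (Multiset.mem_of_le hle hb),
    List.prod_replicate] at h1
  left
  simpa using orderOf_le_of_pow_eq_one (Multiset.card_pos.mpr hne) h1

theorem hasFullAtom_of_isCyclic [Finite G] [IsCyclic G] : HasFullAtom G := by
  obtain ⟨g, hg⟩ := IsCyclic.exists_ofOrder_eq_natCard (α := G)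
  exact ⟨_, isPOAtom_nsmul_singleton_orderOf (isOfFinOrder_of_finite g), by simp [hg]⟩

theorem prod_map_sr {n : ℕ} (l : List (ZMod n)) : (l.map DihedralGroup.sr).prod =
    if Even l.length then .r (-l.alternatingSum) else .sr l.alternatingSum := by
  induction l with
  | nil => simp
  | cons i l ih =>
    rw [List.map_cons, List.prod_cons, ih, List.length_cons, List.alternatingSum_cons]
    by_cases hl : Even l.length <;> simp [hl, Nat.even_add_one, sub_eq_add_neg]

theorem intCast_alternatingSum {R : Type*} [Ring R] (l : List ℤ) :
    ((l.alternatingSum : ℤ) : R) = (l.map Int.cast).alternatingSum := by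
  induction l with
  | nil => simp
  | cons i l ih => simp [List.alternatingSum_cons, ih]

theorem two_mul_abs_alternatingSum_le {l : List ℤ} (hl : ∀ i ∈ l, i = 0 ∨ i = 1)
    (heven : Even l.length) : 2 * |l.alternatingSum| ≤ l.length := by
  suffices -l.length ≤ 2 * l.alternatingSum ∧ 2 * l.alternatingSum ≤ l.length + 1 by
    obtain ⟨k, hk⟩ := heven
    rw [← abs_two (α := ℤ), ← abs_mul, abs_le]
    omega
  clear heven
  induction l with
  | nil => simp
  | cons i l ih =>
    have := ih fun j hj => hl j (List.mem_cons_of_mem i hj)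
    have := hl i List.mem_cons_self
    rw [List.alternatingSum_cons, List.length_cons]
    push_cast
    omega

theorem odd_alternatingSum_iff {l : List ℤ} : Odd l.alternatingSum ↔ Odd l.sum := by
  induction l with
  | nil => simp
  | cons i l ih =>
    rw [List.alternatingSum_cons, List.sum_cons, Int.odd_sub, Int.odd_add, ← Int.not_odd_iff_even,
      ← Int.not_odd_iff_even, ih]

theorem two_mul_le_card_of_isProductOne_map_sr {n : ℕ} {M : Multiset ℤ}
    (hM : ∀ i ∈ M, i = 0 ∨ i = 1) (hodd : Odd M.sum)
    (h1 : IsProductOne (M.map fun i : ℤ => DihedralGroup.sr (i : ZMod n))) :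
    2 * n ≤ Multiset.card M := by
  obtain ⟨l', hl', h1⟩ := h1
  obtain ⟨l, rfl, rfl⟩ := exists_list_map_eq hl'.symm
  rw [show (fun i : ℤ => DihedralGroup.sr (i : ZMod n)) = .sr ∘ Int.cast from rfl,
    ← List.map_map, prod_map_sr, ← intCast_alternatingSum, List.length_map] at h1
  split_ifs at h1 with heven
  · rw [DihedralGroup.one_def, DihedralGroup.r.injEq, neg_eq_zero,
      ZMod.intCast_zmod_eq_zero_iff_dvd] at h1
    have hne : l.alternatingSum ≠ 0 := fun h0 => by
      simpa [h0] using odd_alternatingSum_iff.mpr hodd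
    have := Int.le_of_dvd (abs_pos.mpr hne) ((dvd_abs _ _).mpr h1)
    have := two_mul_abs_alternatingSum_le hM heven
    rw [Multiset.coe_card]
    omega
  · cases h1

theorem isPOAtom_nsmul_sr {n : ℕ} (hn : Odd n) :
    IsPOAtom (n • ({.sr 0, .sr 1} : Multiset (DihedralGroup n))) := by
  refine isPOAtom_of_card_le (isProductOne_nsmul (l := [DihedralGroup.sr 0, .sr 1]) (by simp))
    (by simp [hn.pos.ne']) fun T₁ T₂ h1 h2 hadd _ => ?_
  let M : Multiset ℤ := n • {0, 1}
  have hmem : ∀ i ∈ M, i = 0 ∨ i = 1 := fun i hi => by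
    simpa using Multiset.mem_of_mem_nsmul hi
  have hMT : M.map (fun i : ℤ => DihedralGroup.sr (i : ZMod n)) = T₁ + T₂ := by
    simp [hadd, M, Multiset.map_nsmul]
  have hsum : M.sum = n := by simp [M, Multiset.sum_nsmul]
  obtain ⟨M₁, M₂, hM, rfl, rfl⟩ := exists_map_eq_add hMT
  simp only [hM, Multiset.mem_add, or_imp, forall_and, Multiset.sum_add] at hmem hsum
  rw [Multiset.card_nsmul, Multiset.card_pair, mul_comm, Multiset.card_map,
    Multiset.card_map]
  have hodd : Odd (M₁.sum + M₂.sum) := hsum ▸ (Int.odd_coe_nat n).mpr hn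
  by_cases h : Odd M₁.sum
  · exact Or.inl (two_mul_le_card_of_isProductOne_map_sr hmem.1 h h1)
  · exact Or.inr (two_mul_le_card_of_isProductOne_map_sr hmem.2
      ((Int.odd_add'.mp hodd).mpr (Int.not_odd_iff_even.mp h)) h2)

theorem hasFullAtom_dihedralGroup {n : ℕ} (hn : Odd n) : HasFullAtom (DihedralGroup n) :=
  ⟨_, isPOAtom_nsmul_sr hn, by simp [DihedralGroup.nat_card, mul_comm]⟩

theorem IsProductOne.map {H : Type*} [Group H] (f : G →* H) {S : Multiset G}
    (hS : IsProductOne S) : IsProductOne (S.map f) := by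
  obtain ⟨l, rfl, hl⟩ := hS
  exact ⟨l.map f, Multiset.map_coe f l, by rw [← map_list_prod, hl, map_one]⟩

theorem HasFullAtom.of_mulEquiv {H : Type*} [Group H] (h : HasFullAtom G) (e : G ≃* H) :
    HasFullAtom H := by
  obtain ⟨S, ⟨h1, h0, hatom⟩, hcard⟩ := h
  refine ⟨S.map e, ⟨h1.map e.toMonoidHom, by simpa using h0, fun T₁ T₂ hT₁ hT₂ hadd => ?_⟩, ?_⟩
  · simpa using hatom (T₁.map e.symm) (T₂.map e.symm) (hT₁.map e.symm.toMonoidHom)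
      (hT₂.map e.symm.toMonoidHom) (by simp [← Multiset.map_add, hadd])
  · rw [Multiset.card_map, hcard, Nat.card_congr e.toEquiv]

end Existence

/-- For a finite group `G`, `D(G) = |G|` if and only if `G` is cyclic or isomorphic to a
dihedral group of order `2n` for some odd `n ≥ 3`. -/
theorem stmt15 {G : Type*} [Group G] [Fintype G] :
    largeD G = Fintype.card G ↔
      (IsCyclic G ∨ ∃ n : ℕ, Odd n ∧ 3 ≤ n ∧ Nonempty (G ≃* DihedralGroup n)) := by
  rw [← Nat.card_eq_fintype_card, largeD_eq_natCard_iff]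
  constructor
  · exact fun h => h.isCyclic_or_exists_mulEquiv_dihedralGroup
  · rintro (_ | ⟨n, hodd, -, ⟨e⟩⟩)
    · exact hasFullAtom_of_isCyclic
    · exact (hasFullAtom_dihedralGroup hodd).of_mulEquiv e.symm
end

section
/- Let G be a cyclic group of order n ≥ 3 and let ℓ be an integer with ⌊n/2⌋ + 2 ≤ ℓ ≤ n. Then the number of minimal zero-sum sequences over G of length ℓ equals Φ(n)·p_ℓ(n), where Φ(n) is Euler's totient function and p_ℓ(n) is the number of partitions of n into ℓ positive integer summands. -/
/-- `S` is a minimal zero-sum sequence over the additive abelian group `G`: a nontrivial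
zero-sum sequence no proper nontrivial subsequence of which has sum zero. -/
def IsMinimalZeroSum {G : Type*} [AddCommGroup G] (S : Multiset G) : Prop :=
  S.sum = 0 ∧ S ≠ 0 ∧ ∀ T : Multiset G, T ≤ S → T ≠ 0 → T ≠ S → T.sum ≠ 0

/-!
A long minimal zero-sum sequence over a finite abelian group of order `n` amounts to an element `g`
of order `n` together with a partition `n = x₁ + ⋯ + x_ℓ`, the sequence being `(x₁g) ⋯ (x_ℓ g)`.

Removing one term leaves a zero-sum free sequence `S` with `2|S| > n`; extend it until every group
element is a subsum, and put `a = -σ(S)`. Let `T` be a subsequence of `S` with `|Σ(T)| ≥ 2|T|`,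
enlarged until it is maximal with this property. Since `|Σ(S)| ≤ n < 2|S|`, terms of `S` remain
outside `T`. By maximality each of them adds exactly one subsum to `Σ(T)`, which forces them all to
be equal, and then equal to `a`. So such a `T` never contains all copies of `a`. If `T` consists of
a term `b ≠ a` and all `v` copies of `a`, this gives `|Σ(T)| < 2|T|`, so `Σ(a^v)` meets its
translate by `b`, and `b = x a` with `1 ≤ x ≤ v`. Every integer up to the sum of the multipliers
`x` is then itself a sum of some of them, so zero-sum freeness keeps that sum below the order of
`a`, and hence that order is `n`.

For the uniqueness of `g`, suppose that `g ≠ h` give the same sequence, where `g` is at most as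
frequent as `h`. At least three parts are `1`. Write `h = b g` and `g = a h` with parts `b` and `a`.
Counting forces `b = 2`, so `2a ≡ 1` modulo `n` and `a > n / 2`, but the part `a` occurs at least
three times in a partition of `n`.
-/

open Multiset

section Multisets

variable {α β : Type*}

theorem exists_le_map_eq_of_le_map {f : α → β} {s : Multiset α} {t : Multiset β}
    (h : t ≤ s.map f) : ∃ r ≤ s, r.map f = t := by
  have ht : t ∈ powersetCard (card t) (s.map f) := mem_powersetCard.2 ⟨h, rfl⟩
  rw [powersetCard_map] at ht
  obtain ⟨r, hr, hrt⟩ := mem_map.1 ht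
  exact ⟨r, (mem_powersetCard.1 hr).1, hrt⟩

theorem eq_of_map_eq_map_of_injOn {f : α → β} {A : Set α} (hf : A.InjOn f) {s t : Multiset α}
    (hs : ∀ x ∈ s, x ∈ A) (ht : ∀ x ∈ t, x ∈ A) (h : s.map f = t.map f) : s = t := by
  classical
  ext x
  by_cases hx : x ∈ A
  · have hcount (u : Multiset α) (hu : ∀ y ∈ u, y ∈ A) : count (f x) (u.map f) = count x u := by
      rw [count_map, count_eq_card_filter_eq]
      exact congrArg card (filter_congr fun y hy ↦ hf.eq_iff hx (hu y hy))
    rw [← hcount s hs, h, hcount t ht]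
  · rw [count_eq_zero_of_notMem (mt (hs x) hx), count_eq_zero_of_notMem (mt (ht x) hx)]

theorem cons_le_add_of_mem {a : α} {s : Multiset α} (h : a ∈ s) (t : Multiset α) :
    a ::ₘ t ≤ s + t := by
  rw [← singleton_add]
  exact add_le_add_left (singleton_le.2 h) t

theorem exists_eq_add_replicate_count [DecidableEq α] (a : α) (s : Multiset α) :
    ∃ t, s = t + replicate (s.count a) a :=
  le_iff_exists_add'.1 (le_count_iff_replicate_le.1 le_rfl)

theorem card_le_sum_of_forall_pos {m : Multiset ℕ} (hm : ∀ x ∈ m, 0 < x) : card m ≤ m.sum := by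
  simpa using card_nsmul_le_sum (a := 1) hm

theorem sum_lt_sum_of_lt {r m : Multiset ℕ} (hm : ∀ x ∈ m, 0 < x) (h : r < m) :
    r.sum < m.sum := by
  obtain ⟨x, hx⟩ := lt_iff_cons_le.1 h
  obtain ⟨u, rfl⟩ := Multiset.le_iff_exists_add.1 hx
  have hx_pos : 0 < x := hm x (mem_add.2 (Or.inl (mem_cons_self x r)))
  rw [sum_add, sum_cons]
  omega

theorem count_mul_le_sum (m : Multiset ℕ) (a : ℕ) : m.count a * a ≤ m.sum := by
  obtain ⟨r, hr⟩ := exists_eq_add_replicate_count a m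
  have hsum := congrArg sum hr
  rw [sum_add, sum_replicate, smul_eq_mul] at hsum
  omega

theorem two_mul_card_le_sum_add_count_one {m : Multiset ℕ} (hm : ∀ x ∈ m, 0 < x) :
    2 * card m ≤ m.sum + m.count 1 := by
  induction m using Multiset.induction_on with
  | empty => simp
  | cons x m ih =>
    have hx := hm x (mem_cons_self x m)
    have := ih fun y hy ↦ hm y (mem_cons_of_mem hy)
    rw [card_cons, sum_cons, count_cons]
    split_ifs <;> omega

-- The excess of the parts over `2`, arranged so that no truncated subtraction occurs.
theorem two_mul_card_add_count_mul_le {m : Multiset ℕ} (hm : ∀ x ∈ m, 0 < x) {a : ℕ}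
    (ha : a ≠ 1) :
    2 * card m + m.count a * a ≤ m.sum + m.count 1 + 2 * m.count a := by
  obtain ⟨r, hr⟩ := exists_eq_add_replicate_count a m
  have hle := two_mul_card_le_sum_add_count_one fun x hx ↦ hm x (hr ▸ mem_add.2 (Or.inl hx))
  have hcard := congrArg card hr
  have hsum := congrArg sum hr
  have hone := congrArg (count 1) hr
  rw [card_add, card_replicate] at hcard
  rw [sum_add, sum_replicate, smul_eq_mul] at hsum
  rw [count_add, count_replicate, if_neg ha, add_zero] at hone
  omega

end Multisets

section Subsums

variable {M : Type*} [AddCommMonoid M]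

/-- A zero-sum free sequence: no nontrivial subsequence has sum zero. Removing one term from a
minimal zero-sum sequence leaves such a sequence. -/
def IsZeroSumFree (S : Multiset M) : Prop :=
  ∀ T ≤ S, T ≠ 0 → T.sum ≠ 0

theorem IsZeroSumFree.mono {S T : Multiset M} (hT : IsZeroSumFree T) (h : S ≤ T) :
    IsZeroSumFree S :=
  fun U hU ↦ hT U (hU.trans h)

variable [DecidableEq M]

/-- The set `Σ(S)` of sums of subsequences of `S`. The trivial subsequence is allowed, so
`0 ∈ Σ(S)` always. -/
def subsums (S : Multiset M) : Finset M :=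
  (S.powerset.map sum).toFinset

theorem mem_subsums {S : Multiset M} {x : M} : x ∈ subsums S ↔ ∃ T ≤ S, T.sum = x := by
  simp [subsums]

theorem zero_mem_subsums (S : Multiset M) : 0 ∈ subsums S :=
  mem_subsums.2 ⟨0, Multiset.zero_le S, sum_zero⟩

theorem sum_mem_subsums (S : Multiset M) : S.sum ∈ subsums S :=
  mem_subsums.2 ⟨S, le_rfl, rfl⟩

theorem mem_subsums_cons {S : Multiset M} {a x : M} :
    x ∈ subsums (a ::ₘ S) ↔ x ∈ subsums S ∨ ∃ y ∈ subsums S, a + y = x := by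
  simp [subsums]

theorem subsums_cons (a : M) (S : Multiset M) :
    subsums (a ::ₘ S) = subsums S ∪ (subsums S).image (a + ·) := by
  ext x
  rw [mem_subsums_cons, Finset.mem_union, Finset.mem_image]

theorem insert_sum_subset_subsums_cons {S : Multiset M} {a : M} :
    insert (a ::ₘ S).sum (subsums S) ⊆ subsums (a ::ₘ S) :=
  Finset.insert_subset (sum_mem_subsums _) fun _ hx ↦ mem_subsums_cons.2 (Or.inl hx)

theorem mem_subsums_replicate {v : ℕ} {a x : M} :
    x ∈ subsums (replicate v a) ↔ ∃ i ≤ v, i • a = x := by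
  simp only [mem_subsums, le_replicate_iff]
  constructor
  · rintro ⟨_, ⟨i, hi, rfl⟩, rfl⟩
    exact ⟨i, hi, (sum_replicate i a).symm⟩
  · rintro ⟨i, hi, rfl⟩
    exact ⟨replicate i a, ⟨i, hi, rfl⟩, sum_replicate i a⟩

theorem mem_subsums_add_replicate_one {v : ℕ} {m : Multiset ℕ} (hm : ∀ x ∈ m, x ≤ v + 1) {i : ℕ}
    (hi : i ≤ (m + replicate v 1).sum) : i ∈ subsums (m + replicate v 1) := by
  induction m using Multiset.induction_on generalizing i with
  | empty =>
    rw [zero_add] at hi ⊢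
    exact mem_subsums_replicate.2 ⟨i, by simpa using hi, by simp⟩
  | cons x m ih =>
    have hx := hm x (mem_cons_self x m)
    replace ih {j : ℕ} := @ih (fun y hy ↦ hm y (mem_cons_of_mem hy)) j
    rw [cons_add, sum_cons] at hi
    rw [cons_add, mem_subsums_cons]
    rcases le_or_gt i (m + replicate v 1).sum with h | h
    · exact Or.inl (ih h)
    · rw [sum_add, sum_replicate, smul_eq_mul, mul_one] at h ih hi
      exact Or.inr ⟨i - x, ih (by omega), by omega⟩

/-- `a` is a step of `S` if translation by `a` maps every element of `Σ(S)` other than `σ(S)` into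
`Σ(S)`. When `S` is extended by `a` while staying zero-sum free, this holds as soon as only one
new subsum appears. -/
def IsStep (S : Multiset M) (a : M) : Prop :=
  ∀ x ∈ subsums S, x ≠ S.sum → a + x ∈ subsums S

theorem IsStep.cons {S : Multiset M} {a : M} (h : IsStep S a) : IsStep (a ::ₘ S) a := by
  intro x hx hne
  refine mem_subsums_cons.2 (Or.inr ⟨x, ?_, rfl⟩)
  rcases mem_subsums_cons.1 hx with hx | ⟨y, hy, rfl⟩
  · exact hx
  · refine h y hy ?_
    rintro rfl
    exact hne (sum_cons a S).symm

theorem IsStep.replicate_add {S : Multiset M} {a : M} (h : IsStep S a) (r : ℕ) :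
    IsStep (replicate r a + S) a := by
  induction r with
  | zero => rwa [replicate_zero, zero_add]
  | succ r ih =>
    rw [replicate_succ, cons_add]
    exact ih.cons

end Subsums

theorem IsZeroSumFree.sum_lt_addOrderOf {M : Type*} [AddCommMonoid M] {a : M}
    (ha : IsOfFinAddOrder a) {m : Multiset ℕ} (hfree : IsZeroSumFree (m.map (· • a)))
    (hm : ∀ i ≤ m.sum, i ∈ subsums m) :
    m.sum < addOrderOf a := by
  by_contra! hle
  obtain ⟨r, hr, hsum⟩ := mem_subsums.1 (hm _ hle)
  refine hfree (r.map (· • a)) (map_le_map hr) ?_ ?_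
  · intro h
    rw [map_eq_zero.1 h, sum_zero] at hsum
    exact ha.addOrderOf_pos.ne hsum
  · rw [← sum_smul, hsum, addOrderOf_nsmul_eq_zero]

section ZeroSumFree

variable {G : Type*} [AddCommGroup G] [DecidableEq G] {S T : Multiset G} {a b x : G}

theorem sum_sub_mem_subsums (h : x ∈ subsums S) : S.sum - x ∈ subsums S := by
  obtain ⟨T, hT, rfl⟩ := mem_subsums.1 h
  obtain ⟨U, rfl⟩ := Multiset.le_iff_exists_add.1 hT
  exact mem_subsums.2 ⟨U, Multiset.le_add_left U T, by rw [sum_add, add_sub_cancel_left]⟩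

theorem isZeroSumFree_cons :
    IsZeroSumFree (a ::ₘ S) ↔ IsZeroSumFree S ∧ -a ∉ subsums S := by
  constructor
  · refine fun h ↦ ⟨h.mono (le_cons_self S a), fun ha ↦ ?_⟩
    obtain ⟨T, hT, hsum⟩ := mem_subsums.1 ha
    exact h (a ::ₘ T) (cons_le_cons a hT) cons_ne_zero (by rw [sum_cons, hsum, add_neg_cancel])
  · rintro ⟨hS, ha⟩ T hT hT0 hsum
    by_cases haT : a ∈ T
    · obtain ⟨U, rfl⟩ := exists_cons_of_mem haT
      rw [sum_cons] at hsum
      exact ha (mem_subsums.2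
        ⟨U, (cons_le_cons_iff a).1 hT, eq_neg_of_add_eq_zero_right hsum⟩)
    · exact hS T ((le_cons_of_notMem haT).1 hT) hT0 hsum

theorem IsZeroSumFree.sum_cons_notMem_subsums (h : IsZeroSumFree (a ::ₘ S)) :
    (a ::ₘ S).sum ∉ subsums S := by
  intro hmem
  have hneg := sum_sub_mem_subsums hmem
  rw [sum_cons, sub_add_cancel_right] at hneg
  exact (isZeroSumFree_cons.1 h).2 hneg

theorem IsZeroSumFree.card_subsums_lt_card_subsums_cons (h : IsZeroSumFree (a ::ₘ S)) :
    (subsums S).card < (subsums (a ::ₘ S)).card := by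
  rw [← Nat.add_one_le_iff, ← Finset.card_insert_of_notMem h.sum_cons_notMem_subsums]
  exact Finset.card_le_card insert_sum_subset_subsums_cons

theorem IsZeroSumFree.card_lt_card_subsums (h : IsZeroSumFree S) :
    card S < (subsums S).card := by
  induction S using Multiset.induction_on with
  | empty => exact Finset.card_pos.2 ⟨0, zero_mem_subsums 0⟩
  | cons a S ih =>
    rw [card_cons]
    exact Nat.lt_of_le_of_lt (ih (isZeroSumFree_cons.1 h).1) h.card_subsums_lt_card_subsums_cons

theorem IsZeroSumFree.isStep_of_card_subsums_cons_le (h : IsZeroSumFree (a ::ₘ S))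
    (hcard : (subsums (a ::ₘ S)).card ≤ (subsums S).card + 1) : IsStep S a := by
  intro x hx hne
  have heq : insert (a ::ₘ S).sum (subsums S) = subsums (a ::ₘ S) :=
    Finset.eq_of_subset_of_card_le insert_sum_subset_subsums_cons
      (by rwa [Finset.card_insert_of_notMem h.sum_cons_notMem_subsums])
  have hmem : a + x ∈ subsums (a ::ₘ S) := mem_subsums_cons.2 (Or.inr ⟨x, hx, rfl⟩)
  rw [← heq, Finset.mem_insert, sum_cons, add_right_inj] at hmem
  exact hmem.resolve_left hne

theorem IsStep.eq_of_isZeroSumFree (ha : IsStep S a) (hb : IsStep S b) (hS : S ≠ 0)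
    (hfa : IsZeroSumFree (a ::ₘ S)) (hfb : IsZeroSumFree (b ::ₘ S)) : a = b := by
  by_contra hne
  have ha0 : a ≠ 0 := by
    simpa using hfa {a} (singleton_le.2 (mem_cons_self a S)) (singleton_ne_zero a)
  have hsum : S.sum ≠ 0 := (isZeroSumFree_cons.1 hfa).1 S le_rfl hS
  have haS : a ∈ subsums S := by simpa using ha 0 (zero_mem_subsums S) hsum.symm
  have hsub : b + (S.sum - a) ∈ subsums S :=
    hb _ (sum_sub_mem_subsums haS) (by simpa using ha0)
  have hadd : a + (b + (S.sum - a)) ∈ subsums S := ha _ hsub fun h ↦ hne <| by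
    rwa [← add_sub_assoc, sub_eq_iff_eq_add, add_comm, add_right_inj, eq_comm] at h
  apply hfb.sum_cons_notMem_subsums
  rwa [sum_cons, ← show a + (b + (S.sum - a)) = b + S.sum by abel]

theorem IsStep.eq_neg_sum_cons (h : IsStep S a) (hfree : IsZeroSumFree (a ::ₘ S))
    (hneg : -a ∈ subsums (a ::ₘ S)) : a = -(a ::ₘ S).sum := by
  have ha := (isZeroSumFree_cons.1 hfree).2
  obtain ⟨y, hy, hya⟩ := (mem_subsums_cons.1 hneg).resolve_left ha
  have hyS : y = S.sum := by
    by_contra hne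
    exact ha (hya ▸ h y hy hne)
  rw [sum_cons, ← hyS, hya, neg_neg]

theorem IsZeroSumFree.exists_forall_isStep (hS : IsZeroSumFree S)
    (hcard : (subsums S).card < 2 * card S) (hTS : T ≤ S)
    (hT : 2 * card T ≤ (subsums T).card) :
    ∃ U R, T ≤ U ∧ R ≠ 0 ∧ R + U = S ∧ ∀ a ∈ R, IsStep U a := by
  have hfin : {U | U ≤ S ∧ 2 * card U ≤ (subsums U).card}.Finite :=
    (Set.finite_Iic S).subset fun U hU ↦ hU.1
  obtain ⟨U, hTU, ⟨hUS, hU⟩, hmax⟩ := hfin.exists_le_maximal ⟨hTS, hT⟩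
  obtain ⟨R, rfl⟩ := le_iff_exists_add'.1 hUS
  refine ⟨U, R, hTU, ?_, rfl, fun a ha ↦ ?_⟩
  · rintro rfl
    rw [zero_add] at hcard
    omega
  · have haU := cons_le_add_of_mem ha U
    refine (hS.mono haU).isStep_of_card_subsums_cons_le ?_
    by_contra! hlt
    refine (lt_cons_self U a).not_ge (hmax ⟨haU, ?_⟩ (le_cons_self U a))
    rw [card_cons]
    omega

theorem IsZeroSumFree.count_neg_sum_lt (hS : IsZeroSumFree S)
    (hcard : (subsums S).card < 2 * card S) (hneg : ∀ a ∈ S, -a ∈ subsums S) (hTS : T ≤ S)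
    (hT0 : T ≠ 0) (hT : 2 * card T ≤ (subsums T).card) :
    T.count (-S.sum) < S.count (-S.sum) := by
  obtain ⟨U, R, hTU, hR0, rfl, hstep⟩ := hS.exists_forall_isStep hcard hTS hT
  obtain ⟨a, haR⟩ := exists_mem_of_ne_zero hR0
  have hU0 : U ≠ 0 := (hT0.bot_lt.trans_le hTU).ne'
  have hfree {c : G} (hc : c ∈ R) : IsZeroSumFree (c ::ₘ U) :=
    hS.mono (cons_le_add_of_mem hc U)
  obtain ⟨k, rfl⟩ : ∃ k, R = replicate (k + 1) a := by
    obtain ⟨k, hk⟩ := Nat.exists_eq_succ_of_ne_zero (card_pos.2 hR0).ne'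
    exact ⟨k, eq_replicate.2 ⟨hk, fun c hc ↦
      (hstep c hc).eq_of_isZeroSumFree (hstep a haR) hU0 (hfree hc) (hfree haR)⟩⟩
  have ha : a = -(replicate (k + 1) a + U).sum := by
    have hnega := hneg a (mem_add.2 (Or.inl haR))
    rw [replicate_succ, cons_add] at hS hnega ⊢
    exact ((hstep a haR).replicate_add k).eq_neg_sum_cons hS hnega
  rw [← ha, count_add, count_replicate_self]
  have := count_le_of_le a hTU
  omega

theorem IsZeroSumFree.exists_nsmul_eq_of_card_subsums_lt {v : ℕ}
    (hfree : IsZeroSumFree (b ::ₘ replicate v a))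
    (hcard : (subsums (b ::ₘ replicate v a)).card < 2 * (v + 1)) :
    ∃ x, 0 < x ∧ x ≤ v ∧ x • a = b := by
  have hnd : ¬Disjoint (subsums (replicate v a)) ((subsums (replicate v a)).image (b + ·)) := by
    intro hd
    have hlt := (isZeroSumFree_cons.1 hfree).1.card_lt_card_subsums
    rw [subsums_cons, Finset.card_union_of_disjoint hd,
      Finset.card_image_of_injective _ (add_right_injective b)] at hcard
    rw [card_replicate] at hlt
    omega
  obtain ⟨z, hz, hz'⟩ := Finset.not_disjoint_iff.1 hnd
  obtain ⟨i, hi, rfl⟩ := mem_subsums_replicate.1 hz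
  obtain ⟨_, hy, hyi⟩ := Finset.mem_image.1 hz'
  obtain ⟨j, hj, rfl⟩ := mem_subsums_replicate.1 hy
  have hij : j < i := by
    by_contra! hij
    refine (isZeroSumFree_cons.1 hfree).2
      (mem_subsums_replicate.2 ⟨j - i, (Nat.sub_le j i).trans hj, ?_⟩)
    rw [sub_nsmul a hij, ← hyi]
    abel
  refine ⟨i - j, Nat.sub_pos_of_lt hij, (Nat.sub_le i j).trans hi, ?_⟩
  rw [sub_nsmul a hij.le, ← hyi]
  abel

theorem IsZeroSumFree.exists_nsmul_neg_sum_eq (hS : IsZeroSumFree S)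
    (hcard : (subsums S).card < 2 * card S) (hneg : ∀ a ∈ S, -a ∈ subsums S) (hb : b ∈ S) :
    ∃ x, 0 < x ∧ x ≤ S.count (-S.sum) ∧ x • (-S.sum) = b := by
  by_cases hba : b = -S.sum
  · exact ⟨1, one_pos, hba ▸ one_le_count_iff_mem.2 hb, by rw [one_nsmul, hba]⟩
  have hle : b ::ₘ replicate (S.count (-S.sum)) (-S.sum) ≤ S := by
    obtain ⟨R, hR⟩ := exists_eq_add_replicate_count (-S.sum) S
    have hbR : b ∈ R := by
      rw [hR, mem_add] at hb
      exact hb.resolve_right fun h ↦ hba (eq_of_mem_replicate h)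
    exact (cons_le_add_of_mem hbR _).trans hR.ge
  refine (hS.mono hle).exists_nsmul_eq_of_card_subsums_lt ?_
  by_contra! hlt
  have := hS.count_neg_sum_lt hcard hneg hle cons_ne_zero (by simpa using hlt)
  rw [count_cons_of_ne (Ne.symm hba), count_replicate_self] at this
  exact this.false

end ZeroSumFree

section SavchevChen

variable {G : Type*} [AddCommGroup G]

theorem IsZeroSumFree.card_lt_natCard [Finite G] {S : Multiset G} (hS : IsZeroSumFree S) :
    card S < Nat.card G := by
  classical
  cases nonempty_fintype G
  rw [Nat.card_eq_fintype_card]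
  exact hS.card_lt_card_subsums.trans_le (Finset.card_le_univ _)

theorem IsZeroSumFree.exists_le_forall_mem_subsums [Finite G] [DecidableEq G] {S : Multiset G}
    (hS : IsZeroSumFree S) :
    ∃ T, S ≤ T ∧ IsZeroSumFree T ∧ ∀ x, x ∈ subsums T := by
  by_cases hfull : ∀ x, x ∈ subsums S
  · exact ⟨S, le_rfl, hS, hfull⟩
  · obtain ⟨x, hx⟩ := not_forall.1 hfull
    have hxS : IsZeroSumFree (-x ::ₘ S) := isZeroSumFree_cons.2 ⟨hS, by rwa [neg_neg]⟩
    obtain ⟨T, hle, hT⟩ := hxS.exists_le_forall_mem_subsums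
    exact ⟨T, (le_cons_self S (-x)).trans hle, hT⟩
termination_by Nat.card G - card S
decreasing_by
  have := hxS.card_lt_natCard
  rw [card_cons] at this ⊢
  omega

theorem IsZeroSumFree.exists_map_nsmul_eq_of_forall_mem_subsums [Finite G] [DecidableEq G]
    {S : Multiset G} (hS : IsZeroSumFree S) (hcard : Nat.card G < 2 * card S)
    (hfull : ∀ x, x ∈ subsums S) :
    ∃ (a : G) (m : Multiset ℕ), (∀ x ∈ m, 0 < x) ∧ m.sum < addOrderOf a ∧
      m.map (· • a) = S := by
  have hcard' : (subsums S).card < 2 * card S := by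
    cases nonempty_fintype G
    rw [Nat.card_eq_fintype_card] at hcard
    exact (Finset.card_le_univ _).trans_lt hcard
  generalize ha : -S.sum = a
  have hindex (b : G) (hb : b ∈ S) : ∃ x, 0 < x ∧ x ≤ S.count a ∧ x • a = b :=
    ha ▸ hS.exists_nsmul_neg_sum_eq hcard' (fun c _ ↦ hfull (-c)) hb
  choose! f hf_pos hf_le hf_eq using hindex
  obtain ⟨R, hR⟩ := exists_eq_add_replicate_count a S
  have hRS (b : G) (hb : b ∈ R) : b ∈ S := hR ▸ mem_add.2 (Or.inl hb)
  have hmap : (R.map f + replicate (S.count a) 1).map (· • a) = S := by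
    have hR_map : (R.map f).map (· • a) = R := by
      rw [map_map]
      exact (map_congr rfl fun b hb ↦ hf_eq b (hRS b hb)).trans (map_id R)
    rw [Multiset.map_add, hR_map, map_replicate, one_nsmul, ← hR]
  refine ⟨a, R.map f + replicate (S.count a) 1, fun x hx ↦ ?_, ?_, hmap⟩
  · rcases mem_add.1 hx with hx | hx
    · obtain ⟨b, hb, rfl⟩ := mem_map.1 hx
      exact hf_pos b (hRS b hb)
    · exact one_pos.trans_eq (eq_of_mem_replicate hx).symm
  · refine IsZeroSumFree.sum_lt_addOrderOf (isOfFinAddOrder_of_finite a) (hmap.symm ▸ hS)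
      fun i hi ↦ mem_subsums_add_replicate_one (fun x hx ↦ ?_) hi
    obtain ⟨b, hb, rfl⟩ := mem_map.1 hx
    exact (hf_le b (hRS b hb)).trans (Nat.le_succ _)

/-- The Savchev–Chen structure theorem for long zero-sum free sequences. -/
theorem IsZeroSumFree.exists_map_nsmul_eq [Finite G] {S : Multiset G} (hS : IsZeroSumFree S)
    (hcard : Nat.card G < 2 * card S) :
    ∃ (a : G) (m : Multiset ℕ), (∀ x ∈ m, 0 < x) ∧ m.sum < addOrderOf a ∧
      m.map (· • a) = S := by
  classical
  obtain ⟨T, hST, hT, hfull⟩ := hS.exists_le_forall_mem_subsums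
  have hcardT : Nat.card G < 2 * card T :=
    hcard.trans_le (Nat.mul_le_mul_left 2 (card_le_card hST))
  obtain ⟨a, m, hpos, hsum, rfl⟩ := hT.exists_map_nsmul_eq_of_forall_mem_subsums hcardT hfull
  obtain ⟨r, hr, rfl⟩ := exists_le_map_eq_of_le_map hST
  obtain ⟨u, rfl⟩ := Multiset.le_iff_exists_add.1 hr
  rw [sum_add] at hsum
  exact ⟨a, r, fun x hx ↦ hpos x (mem_of_le hr hx), by omega, rfl⟩

end SavchevChen

section PartitionSeq

/-- The sequence `(x₁g) ⋯ (x_ℓ g)` attached to an element `g` and a partition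
`n = x₁ + ⋯ + x_ℓ`. -/
def partitionSeq {M : Type*} [AddMonoid M] {n : ℕ} (g : M) (p : n.Partition) : Multiset M :=
  p.parts.map (· • g)

theorem card_partitionSeq {M : Type*} [AddMonoid M] {n : ℕ} (g : M) (p : n.Partition) :
    card (partitionSeq g p) = card p.parts :=
  card_map _ _

theorem mem_Ioc_of_mem_parts {n : ℕ} (p : n.Partition) {x : ℕ} (hx : x ∈ p.parts) :
    x ∈ Set.Ioc 0 n :=
  ⟨p.parts_pos hx, p.le_of_mem_parts hx⟩

theorem three_le_count_one {n : ℕ} (p : n.Partition) (hp : n + 2 < 2 * card p.parts) :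
    3 ≤ p.parts.count 1 := by
  have hle := two_mul_card_le_sum_add_count_one fun _ hx ↦ p.parts_pos hx
  rw [p.parts_sum] at hle
  omega

theorem nsmul_injOn_Ioc_addOrderOf {M : Type*} [AddLeftCancelMonoid M] (g : M) :
    (Set.Ioc 0 (addOrderOf g)).InjOn (· • g) := by
  intro x hx y hy h
  obtain ⟨x, rfl⟩ := Nat.exists_eq_succ_of_ne_zero hx.1.ne'
  obtain ⟨y, rfl⟩ := Nat.exists_eq_succ_of_ne_zero hy.1.ne'
  simp only [Nat.succ_eq_add_one, succ_nsmul', add_right_inj] at h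
  rw [nsmul_injOn_Iio_addOrderOf hx.2 hy.2 h]

variable {M : Type*} [AddLeftCancelMonoid M] {n : ℕ} {g h : M} {p q : n.Partition}

theorem partitionSeq_inj (hg : addOrderOf g = n) : partitionSeq g p = partitionSeq g q ↔ p = q := by
  refine ⟨fun h ↦ Nat.Partition.ext ?_, congrArg _⟩
  subst hg
  exact eq_of_map_eq_map_of_injOn (nsmul_injOn_Ioc_addOrderOf g)
    (fun _ ↦ mem_Ioc_of_mem_parts p) (fun _ ↦ mem_Ioc_of_mem_parts q) h

theorem count_partitionSeq [DecidableEq M] (hg : addOrderOf g = n) {x : ℕ} (hx : x ∈ p.parts) :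
    (partitionSeq g p).count (x • g) = p.parts.count x := by
  subst hg
  exact count_map_eq_count _ _
    ((nsmul_injOn_Ioc_addOrderOf g).mono fun _ ↦ mem_Ioc_of_mem_parts p) x hx

theorem exists_mem_parts_nsmul_eq_of_partitionSeq_eq (hg : addOrderOf g = n)
    (hh : addOrderOf h = n) (hq : 1 ∈ q.parts) (heq : partitionSeq g p = partitionSeq h q) :
    ∃ x ∈ p.parts, x • g = h ∧ p.parts.count x = q.parts.count 1 := by
  classical
  have hmem : h ∈ partitionSeq g p := heq ▸ mem_map.2 ⟨1, hq, one_nsmul h⟩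
  obtain ⟨x, hx, hxg⟩ := mem_map.1 hmem
  refine ⟨x, hx, hxg, ?_⟩
  rw [← count_partitionSeq hg hx, hxg, heq, ← count_partitionSeq hh hq, one_nsmul]

theorem eq_of_partitionSeq_eq_of_count_one_le (hg : addOrderOf g = n) (hh : addOrderOf h = n)
    (hcard : n + 2 < 2 * card p.parts) (heq : partitionSeq g p = partitionSeq h q)
    (hle : p.parts.count 1 ≤ q.parts.count 1) : g = h := by
  have hcard_eq : card p.parts = card q.parts := by
    rw [← card_partitionSeq g, heq, card_partitionSeq]
  have hp1 : 3 ≤ p.parts.count 1 := three_le_count_one p hcard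
  have hp_mem : 1 ∈ p.parts := count_pos.1 (by omega)
  have hq_mem : 1 ∈ q.parts := count_pos.1 (by omega)
  obtain ⟨b, hb, hbg, hbcount⟩ :=
    exists_mem_parts_nsmul_eq_of_partitionSeq_eq hg hh hq_mem heq
  obtain ⟨a, ha, hah, hacount⟩ :=
    exists_mem_parts_nsmul_eq_of_partitionSeq_eq hh hg hp_mem heq.symm
  by_contra hne
  have hb1 : b ≠ 1 := fun h ↦ hne (by rw [← hbg, h, one_nsmul])
  have hb_pos := p.parts_pos hb
  have ha_pos := q.parts_pos ha
  have hb2 : b = 2 := by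
    have hweight := two_mul_card_add_count_mul_le (fun _ hx ↦ p.parts_pos hx) hb1
    rw [p.parts_sum, hbcount] at hweight
    by_contra hb2
    have : q.parts.count 1 * 3 ≤ q.parts.count 1 * b := Nat.mul_le_mul_left _ (by omega)
    omega
  have hn_lt : n < 2 * a := by
    have hga : (2 * a) • g = 1 • g := by
      rw [mul_comm, mul_nsmul', ← hb2, hbg, hah, one_nsmul]
    have hmod : 1 ≡ 2 * a [MOD n] := hg ▸ (nsmul_eq_nsmul_iff_modEq.1 hga).symm
    have := Nat.le_of_dvd (by omega) ((Nat.modEq_iff_dvd' (by omega)).1 hmod)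
    omega
  have ha_le : 3 * a ≤ n := by
    have hsum := count_mul_le_sum q.parts a
    rw [q.parts_sum, hacount] at hsum
    exact (Nat.mul_le_mul_right a hp1).trans hsum
  omega

theorem eq_of_partitionSeq_eq (hg : addOrderOf g = n) (hh : addOrderOf h = n)
    (hcard : n + 2 < 2 * card p.parts) (heq : partitionSeq g p = partitionSeq h q) : g = h := by
  rcases le_total (p.parts.count 1) (q.parts.count 1) with hle | hle
  · exact eq_of_partitionSeq_eq_of_count_one_le hg hh hcard heq hle
  · have hcard' : n + 2 < 2 * card q.parts := by
      rwa [← card_partitionSeq h, ← heq, card_partitionSeq]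
    exact (eq_of_partitionSeq_eq_of_count_one_le hh hg hcard' heq.symm hle).symm

end PartitionSeq

section MinimalZeroSum

variable {G : Type*} [AddCommGroup G] {n : ℕ}

theorem isMinimalZeroSum_partitionSeq (hn : n ≠ 0) {g : G} (hg : addOrderOf g = n)
    (p : n.Partition) : IsMinimalZeroSum (partitionSeq g p) := by
  have hparts_ne : p.parts ≠ 0 := fun h ↦ hn (by rw [← p.parts_sum, h, sum_zero])
  refine ⟨?_, mt map_eq_zero.1 hparts_ne, fun T hT hT0 hne hsum ↦ ?_⟩
  · rw [partitionSeq, ← sum_smul, p.parts_sum, ← hg, addOrderOf_nsmul_eq_zero]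
  obtain ⟨r, hr, rfl⟩ := exists_le_map_eq_of_le_map hT
  have hr_ne : r ≠ p.parts := by
    rintro rfl
    exact hne rfl
  have hr_lt : r.sum < n :=
    p.parts_sum ▸ sum_lt_sum_of_lt (fun _ hx ↦ p.parts_pos hx) (hr.lt_of_ne hr_ne)
  have hr_pos : 0 < r.sum :=
    sum_lt_sum_of_lt (fun _ hx ↦ p.parts_pos (mem_of_le hr hx))
      (bot_lt_iff_ne_bot.2 (mt map_eq_zero.2 hT0))
  rw [← sum_smul] at hsum
  exact Nat.not_dvd_of_pos_of_lt hr_pos hr_lt (hg ▸ addOrderOf_dvd_of_nsmul_eq_zero hsum)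

theorem IsMinimalZeroSum.isZeroSumFree_of_cons {a : G} {S : Multiset G}
    (h : IsMinimalZeroSum (a ::ₘ S)) : IsZeroSumFree S :=
  fun T hT hT0 ↦ h.2.2 T (hT.trans (le_cons_self S a)) hT0 (hT.trans_lt (lt_cons_self S a)).ne

theorem IsMinimalZeroSum.exists_partitionSeq_eq [Finite G] {S : Multiset G}
    (hn : Nat.card G = n) (hS : IsMinimalZeroSum S) (hcard : n + 2 < 2 * card S) :
    ∃ g : G, addOrderOf g = n ∧ ∃ p : n.Partition, partitionSeq g p = S := by
  obtain ⟨b, hb⟩ := exists_mem_of_ne_zero hS.2.1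
  obtain ⟨S, rfl⟩ := exists_cons_of_mem hb
  rw [card_cons] at hcard
  obtain ⟨g, m, hpos, hlt, rfl⟩ := hS.isZeroSumFree_of_cons.exists_map_nsmul_eq (by omega)
  rw [card_map] at hcard
  have hcard_le := card_le_sum_of_forall_pos hpos
  have hg : addOrderOf g = n := by
    have hdvd : addOrderOf g ∣ n := hn ▸ addOrderOf_dvd_natCard g
    have hn_pos : n ≠ 0 := hn ▸ Nat.card_pos.ne'
    exact (Nat.eq_of_dvd_of_lt_two_mul hn_pos hdvd (by omega)).symm
  have hb_eq : (n - m.sum) • g = b := by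
    have hsum : b + m.sum • g = 0 := by rw [sum_smul, ← sum_cons, hS.1]
    rw [eq_neg_of_add_eq_zero_left hsum, sub_nsmul g (by omega), ← hg, addOrderOf_nsmul_eq_zero,
      zero_add]
  refine ⟨g, hg, ⟨(n - m.sum) ::ₘ m, fun {x} hx ↦ ?_, ?_⟩, ?_⟩
  · rcases mem_cons.1 hx with rfl | hx
    · omega
    · exact hpos x hx
  · rw [sum_cons]
    omega
  · rw [partitionSeq, map_cons, hb_eq]

end MinimalZeroSum

theorem stmt18_general {G : Type*} [AddCommGroup G] [Finite G] {n l : ℕ} (hn : Nat.card G = n)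
    (hl : n / 2 + 2 ≤ l) :
    Set.ncard {S : Multiset G | IsMinimalZeroSum S ∧ card S = l} =
      Nat.card {g : G // addOrderOf g = n} *
        Nat.card {p : n.Partition // card p.parts = l} := by
  have hn0 : n ≠ 0 := hn ▸ Nat.card_pos.ne'
  have hl' : n + 2 < 2 * l := by omega
  let F (x : {g : G // addOrderOf g = n} × {p : n.Partition // card p.parts = l}) : Multiset G :=
    partitionSeq x.1.1 x.2.1
  have hinj : F.Injective := by
    rintro ⟨⟨g, hg⟩, ⟨p, hp⟩⟩ ⟨⟨h, hh⟩, ⟨q, hq⟩⟩ heq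
    obtain rfl : g = h := eq_of_partitionSeq_eq hg hh (by rwa [hp]) heq
    obtain rfl : p = q := (partitionSeq_inj hg).1 heq
    rfl
  have hrange : {S : Multiset G | IsMinimalZeroSum S ∧ card S = l} = Set.range F := by
    refine Set.Subset.antisymm ?_ ?_
    · rintro S ⟨hS, rfl⟩
      obtain ⟨g, hg, p, rfl⟩ := hS.exists_partitionSeq_eq hn hl'
      exact ⟨⟨⟨g, hg⟩, ⟨p, (card_partitionSeq g p).symm⟩⟩, rfl⟩
    · rintro _ ⟨⟨⟨g, hg⟩, ⟨p, rfl⟩⟩, rfl⟩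
      exact ⟨isMinimalZeroSum_partitionSeq hn0 hg p, card_partitionSeq g p⟩
  rw [hrange, ← Nat.card_coe_set_eq, Nat.card_range_of_injective hinj, Nat.card_prod]

/-- For a cyclic group `G` of order `n ≥ 3` and `⌊n/2⌋ + 2 ≤ ℓ ≤ n`, the number of
minimal zero-sum sequences over `G` of length `ℓ` equals `Φ(n)·p_ℓ(n)`, where `Φ` is
Euler's totient function and `p_ℓ(n)` is the number of partitions of `n` into `ℓ`
positive summands. -/
theorem stmt18 {G : Type*} [AddCommGroup G] [Fintype G] [IsAddCyclic G]
    (n : ℕ) (hn : Fintype.card G = n) (h3 : 3 ≤ n)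
    (l : ℕ) (hl1 : n / 2 + 2 ≤ l) (hl2 : l ≤ n) :
    Set.ncard {S : Multiset G | IsMinimalZeroSum S ∧ Multiset.card S = l} =
      Nat.totient n * Nat.card {p : n.Partition // Multiset.card p.parts = l} := by
  classical
  rw [stmt18_general (Nat.card_eq_fintype_card.trans hn) hl1, Nat.card_eq_fintype_card,
    Fintype.card_subtype, IsAddCyclic.card_addOrderOf_eq_totient hn.symm.dvd]
end
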